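/- arXiv:2108.00060 — 2 statements merged into one kernel-verified Lean document; each statement's English description precedes it below -/
import Mathlib

section
/- (Filtered Baker–Campbell–Hausdorff) Given F ∈ 𝓕^{≥d₁} and G ∈ 𝓕^{≥d₂} with d₁, d₂ ≥ 1, there exists K ∈ 𝓕^{≥1} such that e^{{G,·}} ∘ e^{{F,·}} = e^{{K,·}} as operators on 𝓕, and moreover K − F − G ∈ 𝓕^{≥ d₁+d₂}. -/
open scoped BigOperators ENNReal

/-- The index set `ℕ^ℤ_f`: finitely supported functions `ℤ → ℕ`. -/
abbrev Idx : Type := ℤ →₀ ℕ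

/-- Coefficient families of formal Hamiltonians. -/
abbrev Coeffs : Type := Idx → Idx → ℂ

/-- `|α| = ∑_j α_j`. -/
def wt (α : Idx) : ℕ := α.sum fun _ n => n

/-- The momentum `π(α,β) = ∑_j j (α_j - β_j)`. -/
def mom (α β : Idx) : ℤ := (α.sum fun j n => j * (n : ℤ)) - (β.sum fun j n => j * (n : ℤ))

/-- Membership in the space `𝓕` of formal Hamiltonians: vanishing of the
constant and linear coefficients, reality and momentum conservation. -/
def InF (H : Coeffs) : Prop :=
  H 0 0 = 0 ∧ H (Finsupp.single 0 1) 0 = 0 ∧ H 0 (Finsupp.single 0 1) = 0 ∧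
    (∀ α β, H α β = (starRingEnd ℂ) (H β α)) ∧ (∀ α β, mom α β ≠ 0 → H α β = 0)

/-- Membership in `𝓕^{≥d}`: supported on pairs with `|α|+|β| ≥ d+2`. -/
def InFge (d : ℕ) (H : Coeffs) : Prop :=
  InF H ∧ ∀ α β, wt α + wt β < d + 2 → H α β = 0

/-- A single term of the Poisson-bracket double sum `{F,G}_{α,β}`, indexed by
`x = (j, ((α¹,β¹), (α²,β²)))`: it is
`F_{α¹,β¹} G_{α²,β²} (α¹_j β²_j − β¹_j α²_j)` when `π(α¹,β¹) = π(α²,β²) = 0`,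
`α = α¹+α²−e_j` and `β = β¹+β²−e_j`, and `0` otherwise. -/
noncomputable def bracketTerm (F G : Coeffs) (α β : Idx)
    (x : ℤ × (Idx × Idx) × (Idx × Idx)) : ℂ :=
  if mom x.2.1.1 x.2.1.2 = 0 ∧ mom x.2.2.1 x.2.2.2 = 0 ∧
      α = x.2.1.1 + x.2.2.1 - Finsupp.single x.1 1 ∧
      β = x.2.1.2 + x.2.2.2 - Finsupp.single x.1 1 then
    F x.2.1.1 x.2.1.2 * G x.2.2.1 x.2.2.2 *
      ((x.2.1.1 x.1 : ℂ) * (x.2.2.2 x.1 : ℂ) - (x.2.1.2 x.1 : ℂ) * (x.2.2.1 x.1 : ℂ))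
  else 0

/-- The Poisson bracket `{F,G}`, defined coefficientwise by
`{F,G}_{α,β} = i ∑_x bracketTerm F G α β x` (a sum with finitely many
nonzero terms, so the `finsum` gives the intended value). -/
noncomputable def bracket (F G : Coeffs) : Coeffs := fun α β =>
  Complex.I * ∑ᶠ x : ℤ × (Idx × Idx) × (Idx × Idx), bracketTerm F G α β x

/-- Iterates `ad_G^k`. -/
noncomputable def adPow (G : Coeffs) : ℕ → Coeffs → Coeffs
  | 0, H => H
  | k + 1, H => bracket G (adPow G k H)

/-- The formal symplectic change of variables `e^{{G,·}} = ∑_{k≥0} ad_G^k / k!`;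
for `G ∈ 𝓕^{≥1}` each coefficient receives only finitely many nonzero
contributions, so the `finsum` gives the intended value. -/
noncomputable def expAd (G H : Coeffs) : Coeffs := fun α β =>
  ∑ᶠ k : ℕ, ((k.factorial : ℂ))⁻¹ * adPow G k H α β

/-- A complete filtered structure on a real Lie algebra, given by homogeneous projections. -/
structure BGrd (L : Type) [LieRing L] [LieAlgebra ℝ L] where
  p : ℕ → L →ₗ[ℝ] L
  lim : (ℕ → L) → L
  N : L →ₗ[ℝ] L
  pp : ∀ n x, p n (p n x) = p n x
  pp' : ∀ n m x, n ≠ m → p n (p m x) = 0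
  ext : ∀ x, (∀ n, p n x = 0) → x = 0
  p_lim : ∀ n f, p n (lim f) = p n (f n)
  p_N : ∀ n x, p n (N x) = (n : ℝ) • p n x
  N_lie : ∀ x y, N ⁅x, y⁆ = ⁅N x, y⁆ + ⁅x, N y⁆
  fil_lie : ∀ a b x y, (∀ n < a, p n x = 0) → (∀ n < b, p n y = 0) →
    ∀ n < a + b, p n ⁅x, y⁆ = 0

namespace BGrd

variable {L : Type} [LieRing L] [LieAlgebra ℝ L] (S : BGrd L)

/-- The filtration. -/
def fil (k : ℕ) : Submodule ℝ L where
  carrier := {x | ∀ n < k, S.p n x = 0}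
  add_mem' := by
    intro a b ha hb n hn
    simp [ha n hn, hb n hn]
  zero_mem' := by intro n _; simp
  smul_mem' := by
    intro c x hx n hn
    simp [hx n hn]

theorem mem_fil {k : ℕ} {x : L} : x ∈ S.fil k ↔ ∀ n < k, S.p n x = 0 := Iff.rfl

theorem fil_mono {a b : ℕ} (h : a ≤ b) {x : L} (hx : x ∈ S.fil b) : x ∈ S.fil a :=
  fun n hn => hx n (lt_of_lt_of_le hn h)

theorem fil_zero (x : L) : x ∈ S.fil 0 := fun n hn => absurd hn (Nat.not_lt_zero n)

theorem lie_mem {a b : ℕ} {x y : L} (hx : x ∈ S.fil a) (hy : y ∈ S.fil b) :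
    ⁅x, y⁆ ∈ S.fil (a + b) := S.fil_lie a b x y hx hy

theorem lie_mem' {a b c : ℕ} {x y : L} (hx : x ∈ S.fil a) (hy : y ∈ S.fil b) (h : c ≤ a + b) :
    ⁅x, y⁆ ∈ S.fil c := S.fil_mono h (S.lie_mem hx hy)

theorem N_mem {a : ℕ} {x : L} (hx : x ∈ S.fil a) : S.N x ∈ S.fil a := by
  intro n hn
  rw [S.p_N, hx n hn, smul_zero]

theorem eq_of_fil {x y : L} (h : ∀ m, x - y ∈ S.fil m) : x = y := by
  rw [← sub_eq_zero]
  exact S.ext _ fun n => h (n + 1) n (Nat.lt_succ_self n)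

/-- Sum of a series. -/
noncomputable def ts (u : ℕ → L) : L := S.lim fun n => ∑ k ∈ Finset.range (n + 1), u k

theorem ts_sub_mem {u : ℕ → L} (hu : ∀ k, u k ∈ S.fil k) (m : ℕ) :
    S.ts u - ∑ k ∈ Finset.range m, u k ∈ S.fil m := by
  intro n hn
  rw [map_sub, ts, S.p_lim, sub_eq_zero, map_sum, map_sum]
  refine Finset.sum_subset (Finset.range_mono hn) ?_
  intro k _ hk
  exact hu k n (by simpa using hk)

theorem eq_ts {u : ℕ → L} (hu : ∀ k, u k ∈ S.fil k) {x : L}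
    (h : ∀ m, x - ∑ k ∈ Finset.range m, u k ∈ S.fil m) : x = S.ts u := by
  refine S.eq_of_fil fun m => ?_
  have := (S.fil m).sub_mem (h m) (S.ts_sub_mem hu m)
  simpa using this

theorem ts_mem {u : ℕ → L} (hu : ∀ k, u k ∈ S.fil k) {a : ℕ} (h : ∀ k, u k ∈ S.fil a) :
    S.ts u ∈ S.fil a := by
  have h1 := S.ts_sub_mem hu a
  have h2 : ∑ k ∈ Finset.range a, u k ∈ S.fil a := Submodule.sum_mem _ fun k _ => h k
  simpa using (S.fil a).add_mem h1 h2

theorem ts_sub {u v : ℕ → L} (hu : ∀ k, u k ∈ S.fil k) (hv : ∀ k, v k ∈ S.fil k) :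
    S.ts (fun k => u k - v k) = S.ts u - S.ts v := by
  symm
  refine S.eq_ts (fun k => (S.fil k).sub_mem (hu k) (hv k)) fun m => ?_
  have := (S.fil m).sub_mem (S.ts_sub_mem hu m) (S.ts_sub_mem hv m)
  rw [Finset.sum_sub_distrib]
  convert this using 1
  abel

theorem ts_N {u : ℕ → L} (hu : ∀ k, u k ∈ S.fil k) :
    S.ts (fun k => S.N (u k)) = S.N (S.ts u) := by
  symm
  refine S.eq_ts (fun k => S.N_mem (hu k)) fun m => ?_
  rw [← map_sum, ← map_sub]
  exact S.N_mem (S.ts_sub_mem hu m)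

theorem sum_tri {M : Type} [AddCommMonoid M] (f : ℕ → ℕ → M) (m : ℕ) :
    ∑ n ∈ Finset.range m, ∑ q ∈ Finset.HasAntidiagonal.antidiagonal n, f q.1 q.2 =
      ∑ k ∈ Finset.range m, ∑ l ∈ Finset.range (m - k), f k l := by
  rw [Finset.sum_sigma', Finset.sum_sigma']
  refine Finset.sum_bij' (fun x _ => ⟨x.2.1, x.2.2⟩) (fun x _ => ⟨x.1 + x.2, (x.1, x.2)⟩)
    ?_ ?_ ?_ ?_ ?_
  · rintro ⟨n, a, b⟩ h
    simp only [Finset.mem_sigma, Finset.mem_range, Finset.HasAntidiagonal.mem_antidiagonal] at h ⊢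
    omega
  · rintro ⟨a, b⟩ h
    simp only [Finset.mem_sigma, Finset.mem_range, Finset.HasAntidiagonal.mem_antidiagonal] at h ⊢
    exact ⟨by omega, trivial⟩
  · rintro ⟨n, a, b⟩ h
    simp only [Finset.mem_sigma, Finset.mem_range, Finset.HasAntidiagonal.mem_antidiagonal] at h ⊢
    obtain ⟨_, rfl⟩ := h
    rfl
  · rintro ⟨a, b⟩ h
    rfl
  · rintro ⟨n, a, b⟩ h
    rfl

theorem ts_lie {u v : ℕ → L} (hu : ∀ k, u k ∈ S.fil k) (hv : ∀ k, v k ∈ S.fil k) :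
    S.ts (fun m => ∑ q ∈ Finset.HasAntidiagonal.antidiagonal m, ⁅u q.1, v q.2⁆) = ⁅S.ts u, S.ts v⁆ := by
  symm
  refine S.eq_ts (fun m => Submodule.sum_mem _ fun q hq => ?_) fun m => ?_
  · rw [← Finset.HasAntidiagonal.mem_antidiagonal.1 hq]
    exact S.lie_mem (hu _) (hv _)
  rw [sum_tri (fun k l => ⁅u k, v l⁆)]
  have e : ⁅S.ts u, S.ts v⁆ - ∑ k ∈ Finset.range m, ∑ l ∈ Finset.range (m - k), ⁅u k, v l⁆ =
      ⁅S.ts u - ∑ k ∈ Finset.range m, u k, S.ts v⁆ +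
      ∑ k ∈ Finset.range m, ⁅u k, S.ts v - ∑ l ∈ Finset.range (m - k), v l⁆ := by
    simp only [sub_lie, lie_sub, Finset.sum_sub_distrib,  
      sum_lie, lie_sum]
    abel
  rw [e]
  refine (S.fil m).add_mem (S.lie_mem' (S.ts_sub_mem hu m) (S.fil_zero _) (by simp)) ?_
  refine Submodule.sum_mem _ fun k _ => ?_
  exact S.lie_mem' (hu k) (S.ts_sub_mem hv (m - k)) (by omega)

/-- iterated ad -/
def adp (K : L) : ℕ → L → L
  | 0, x => x
  | k + 1, x => ⁅K, adp K k x⁆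

theorem adp_mem {K : L} {a b : ℕ} (hK : K ∈ S.fil a) {x : L} (hx : x ∈ S.fil b) (k : ℕ) :
    adp K k x ∈ S.fil (a * k + b) := by
  induction k with
  | zero => simpa [adp] using hx
  | succ k ih => exact S.lie_mem' hK ih (by rw [mul_add]; omega)

theorem adp_mem' {K : L} {a b c : ℕ} (hK : K ∈ S.fil a) {x : L} (hx : x ∈ S.fil b) (k : ℕ)
    (h : c ≤ a * k + b) :
    adp K k x ∈ S.fil c := S.fil_mono h (S.adp_mem hK hx k)

/-- terms of the exponential series -/
noncomputable def et (K x : L) (k : ℕ) : L := ((k.factorial : ℝ)⁻¹) • adp K k x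

theorem et_zero (K x : L) : et K x 0 = x := by simp [et, adp]

theorem et_succ (K x : L) (k : ℕ) : ((k : ℝ) + 1) • et K x (k + 1) = ⁅K, et K x k⁆ := by
  rw [et, et, smul_smul, lie_smul, adp]
  congr 1
  have : (k.factorial : ℝ) ≠ 0 := by positivity
  have : (k : ℝ) + 1 ≠ 0 := by positivity
  rw [Nat.factorial_succ]
  push_cast
  field_simp

theorem et_mem {K : L} (hK : K ∈ S.fil 1) {x : L} {b : ℕ} (hx : x ∈ S.fil b) (k : ℕ) :
    et K x k ∈ S.fil (k + b) :=
  (S.fil _).smul_mem _ (S.adp_mem' hK hx k (by omega))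

theorem et_mem0 {K : L} (hK : K ∈ S.fil 1) (x : L) (k : ℕ) :
    et K x k ∈ S.fil k := S.et_mem hK (S.fil_zero x) k

/-- terms of the `W` series -/
noncomputable def wtm (K : L) : ℕ → L
  | 0 => 0
  | k + 1 => (((k + 1).factorial : ℝ)⁻¹) • adp K k (S.N K)

theorem wtm_succ (K : L) (k : ℕ) : ((k : ℝ) + 1) • S.wtm K (k + 1) =
    ⁅K, S.wtm K k⁆ + if k = 0 then S.N K else 0 := by
  cases k with
  | zero => simp [wtm, adp]
  | succ k =>
    rw [wtm, wtm, smul_smul, lie_smul, adp]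
    simp only [Nat.add_eq_zero_iff, one_ne_zero, and_false, if_false, add_zero]
    congr 1
    have : ((k + 1).factorial : ℝ) ≠ 0 := by positivity
    have : ((k + 1 : ℕ) : ℝ) + 1 ≠ 0 := by positivity
    rw [Nat.factorial_succ (k + 1)]
    push_cast at *
    field_simp

theorem wtm_mem {K : L} (hK : K ∈ S.fil 1) (k : ℕ) : S.wtm K k ∈ S.fil k := by
  cases k with
  | zero => exact S.fil_zero _
  | succ k => exact (S.fil _).smul_mem _ (S.adp_mem' hK (S.N_mem hK) k (by omega))

/-- exponential -/
noncomputable def E (K x : L) : L := S.ts (et K x)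

/-- W -/
noncomputable def W (K : L) : L := S.ts (S.wtm K)

theorem anti_succ (u v : ℕ → L) (m : ℕ) :
    ((m : ℝ) + 1) • ∑ q ∈ Finset.HasAntidiagonal.antidiagonal (m + 1), ⁅u q.1, v q.2⁆ =
    ∑ q ∈ Finset.HasAntidiagonal.antidiagonal m, (⁅((q.1 : ℝ) + 1) • u (q.1 + 1), v q.2⁆ +
      ⁅u q.1, ((q.2 : ℝ) + 1) • v (q.2 + 1)⁆) := by
  have h1 : ((m : ℝ) + 1) • ∑ q ∈ Finset.HasAntidiagonal.antidiagonal (m + 1), ⁅u q.1, v q.2⁆ =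
      ∑ q ∈ Finset.HasAntidiagonal.antidiagonal (m + 1), ((q.1 : ℝ) • ⁅u q.1, v q.2⁆) +
      ∑ q ∈ Finset.HasAntidiagonal.antidiagonal (m + 1), ((q.2 : ℝ) • ⁅u q.1, v q.2⁆) := by
    rw [Finset.smul_sum, ← Finset.sum_add_distrib]
    refine Finset.sum_congr rfl fun q hq => ?_
    rw [← add_smul]
    congr 1
    have := Finset.HasAntidiagonal.mem_antidiagonal.1 hq
    exact_mod_cast this.symm
  rw [h1, Finset.Nat.sum_antidiagonal_succ, Finset.Nat.sum_antidiagonal_succ',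
    Finset.sum_add_distrib]
  simp [smul_lie, lie_smul]

theorem et_lie (K x y : L) (m : ℕ) :
    et K ⁅x, y⁆ m = ∑ q ∈ Finset.HasAntidiagonal.antidiagonal m, ⁅et K x q.1, et K y q.2⁆ := by
  induction m with
  | zero => simp [et_zero]
  | succ m ih =>
    have hm : (m : ℝ) + 1 ≠ 0 := by positivity
    apply smul_right_injective L hm
    change ((m : ℝ) + 1) • _ = ((m : ℝ) + 1) • _
    rw [anti_succ, et_succ, ih, lie_sum]
    refine Finset.sum_congr rfl fun q _ => ?_
    rw [et_succ, et_succ, leibniz_lie]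

theorem et_N (K y : L) (m : ℕ) :
    et K (S.N y) m = S.N (et K y m) -
      ∑ q ∈ Finset.HasAntidiagonal.antidiagonal m, ⁅S.wtm K q.1, et K y q.2⁆ := by
  induction m with
  | zero => simp [et_zero, wtm]
  | succ m ih =>
    have hm : (m : ℝ) + 1 ≠ 0 := by positivity
    apply smul_right_injective L hm
    change ((m : ℝ) + 1) • _ = ((m : ℝ) + 1) • _
    rw [smul_sub, anti_succ, et_succ, ih, lie_sub, lie_sum, ← map_smul, et_succ, S.N_lie]
    have : ∑ q ∈ Finset.HasAntidiagonal.antidiagonal m, (⁅((q.1 : ℝ) + 1) • S.wtm K (q.1 + 1), et K y q.2⁆ +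
      ⁅S.wtm K q.1, ((q.2 : ℝ) + 1) • et K y (q.2 + 1)⁆) =
      ∑ q ∈ Finset.HasAntidiagonal.antidiagonal m, ⁅K, ⁅S.wtm K q.1, et K y q.2⁆⁆ + ⁅S.N K, et K y m⁆ := by
      have h2 : ⁅S.N K, et K y m⁆ =
        ∑ q ∈ Finset.HasAntidiagonal.antidiagonal m, ⁅if q.1 = 0 then S.N K else 0, et K y q.2⁆ := by
        rw [Finset.sum_eq_single (0, m)]
        · simp
        · rintro ⟨a, b⟩ hq hne
          have : a ≠ 0 := by
            rintro rfl
            apply hne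
            simpa using hq
          simp [this]
        · simp
      rw [h2, ← Finset.sum_add_distrib]
      refine Finset.sum_congr rfl fun q _ => ?_
      rw [et_succ, S.wtm_succ, leibniz_lie K, add_lie]
      abel
    rw [this]
    abel

theorem E_lie {K : L} (hK : K ∈ S.fil 1) (x y : L) : S.E K ⁅x, y⁆ = ⁅S.E K x, S.E K y⁆ := by
  rw [E, E, E, ← S.ts_lie (S.et_mem0 hK x) (S.et_mem0 hK y)]
  congr 1
  funext m
  exact et_lie K x y m

theorem E_N {K : L} (hK : K ∈ S.fil 1) (y : L) :
    S.E K (S.N y) = S.N (S.E K y) - ⁅S.W K, S.E K y⁆ := by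
  rw [E, E, W, ← S.ts_lie (S.wtm_mem hK) (S.et_mem0 hK y), ← S.ts_N (S.et_mem0 hK y),
    ← S.ts_sub]
  · congr 1
    funext m
    exact S.et_N K y m
  · exact fun k => S.N_mem (S.et_mem0 hK y k)
  · intro m
    refine Submodule.sum_mem _ fun q hq => ?_
    rw [← Finset.HasAntidiagonal.mem_antidiagonal.1 hq]
    exact S.lie_mem (S.wtm_mem hK _) (S.et_mem0 hK _ _)

theorem E_sub_mem {K : L} (hK : K ∈ S.fil 1) {x : L} {a b c : ℕ} (hKa : K ∈ S.fil a)
    (hx : x ∈ S.fil b) (h : c ≤ a + b) : S.E K x - x ∈ S.fil c := by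
  have : S.E K x - x = S.ts (fun k => et K x k - if k = 0 then x else 0) := by
    rw [S.ts_sub (S.et_mem0 hK x)]
    · congr 1
      refine S.eq_ts ?_ ?_
      · intro k
        split_ifs with h
        · subst h
          exact S.fil_zero _
        · exact Submodule.zero_mem _
      · intro m
        cases m with
        | zero => exact S.fil_zero _
        | succ m => simp
    · intro k
      split_ifs with h
      · subst h
        exact S.fil_zero _
      · exact Submodule.zero_mem _
  rw [this]
  refine S.ts_mem ?_ ?_
  · intro k
    refine (S.fil _).sub_mem (S.et_mem0 hK x k) ?_
    split_ifs with h
    · subst h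
      exact S.fil_zero _
    · exact Submodule.zero_mem _
  · intro k
    cases k with
    | zero => simp [et_zero]
    | succ k =>
      simp only [Nat.add_eq_zero_iff, one_ne_zero, and_false, if_false, sub_zero]
      exact (S.fil _).smul_mem _ (S.adp_mem' hKa hx _ (by nlinarith))

theorem E_map_sub {K : L} (hK : K ∈ S.fil 1) (x y : L) : S.E K (x - y) = S.E K x - S.E K y := by
  rw [E, E, E, ← S.ts_sub (S.et_mem0 hK x) (S.et_mem0 hK y)]
  congr 1
  funext k
  rw [et, et, et, ← smul_sub]
  congr 1
  induction k with
  | zero => rfl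
  | succ k ih => rw [adp, adp, adp, ih, lie_sub]

theorem adp_smul (K : L) (c : ℝ) (x : L) (k : ℕ) : adp K k (c • x) = c • adp K k x := by
  induction k with
  | zero => rfl
  | succ k ih => rw [adp, adp, ih, lie_smul]

theorem E_mem {K : L} (hK : K ∈ S.fil 1) {x : L} {b : ℕ} (hx : x ∈ S.fil b) :
    S.E K x ∈ S.fil b :=
  S.ts_mem (S.et_mem0 hK x) fun k => S.fil_mono (by omega) (S.et_mem hK hx k)

/-- uniqueness -/
theorem unique_hom {A B : L → L} {V : L} (hV : V ∈ S.fil 1) (hA : ∀ b, ∀ x ∈ S.fil b, A x - x ∈ S.fil (b + 1))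
    (hB : ∀ b, ∀ x ∈ S.fil b, B x - x ∈ S.fil (b + 1))
    (hAs : ∀ (c : ℝ) x, A (c • x) = c • A x) (hBs : ∀ (c : ℝ) x, B (c • x) = c • B x)
    (hAN : ∀ x, A (S.N x) = S.N (A x) - ⁅V, A x⁆) (hBN : ∀ x, B (S.N x) = S.N (B x) - ⁅V, B x⁆)
    (m : ℕ) (x : L) : A (S.p m x) = B (S.p m x) := by
  have hN : S.N (S.p m x) = (m : ℝ) • S.p m x := by
    rw [← sub_eq_zero]
    apply S.ext
    intro n
    rw [map_sub, S.p_N, map_smul]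
    by_cases h : n = m
    · subst h; simp
    · rw [S.pp' _ _ _ h]; simp
  have hy : S.p m x ∈ S.fil m := fun n hn => S.pp' _ _ _ hn.ne
  set y := S.p m x
  have key : S.N (A y - B y) = (m : ℝ) • (A y - B y) + ⁅V, A y - B y⁆ := by
    have h1 := hAN y
    have h2 := hBN y
    rw [hN, hAs] at h1
    rw [hN, hBs] at h2
    rw [map_sub, lie_sub, smul_sub, h1, h2]
    abel
  have : ∀ k, A y - B y ∈ S.fil (m + 1 + k) := by
    intro k
    induction k with
    | zero =>
      have := (S.fil (m + 1)).sub_mem (hA m y hy) (hB m y hy)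
      simpa using this
    | succ k ih =>
      intro n hn
      by_cases h : n < m + 1 + k
      · exact ih n h
      have hn' : n = m + 1 + k := by omega
      have h3 := congrArg (S.p n) key
      rw [S.p_N, map_add, map_smul, S.lie_mem hV ih n (by omega), add_zero, ← sub_eq_zero,
        ← sub_smul, smul_eq_zero] at h3
      refine h3.resolve_left ?_
      refine sub_ne_zero.2 ?_
      have : n ≠ m := by omega
      exact_mod_cast this
  exact S.eq_of_fil fun k => S.fil_mono (by omega) (this k)

theorem unique_all {A B : L → L} {V : L} (hV : V ∈ S.fil 1) (hA : ∀ b, ∀ x ∈ S.fil b, A x - x ∈ S.fil (b + 1))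
    (hB : ∀ b, ∀ x ∈ S.fil b, B x - x ∈ S.fil (b + 1))
    (hAs : ∀ (c : ℝ) x, A (c • x) = c • A x) (hBs : ∀ (c : ℝ) x, B (c • x) = c • B x)
    (hAd : ∀ x y, A (x - y) = A x - A y) (hBd : ∀ x y, B (x - y) = B x - B y)
    (hAN : ∀ x, A (S.N x) = S.N (A x) - ⁅V, A x⁆) (hBN : ∀ x, B (S.N x) = S.N (B x) - ⁅V, B x⁆)
    (x : L) : A x = B x := by
  have h : ∀ m, ∃ y ∈ S.fil m, A x - B x = A y - B y := by
    intro m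
    induction m with
    | zero => exact ⟨x, S.fil_zero x, rfl⟩
    | succ m ih =>
      obtain ⟨y, hy, e⟩ := ih
      refine ⟨y - S.p m y, ?_, ?_⟩
      · intro n hn
        rw [map_sub]
        by_cases h : n = m
        · subst h; rw [S.pp, sub_self]
        · rw [S.pp' _ _ _ h, hy n (by omega), sub_zero]
      · rw [hAd, hBd, S.unique_hom hV hA hB hAs hBs hAN hBN m y, e]
        abel
  refine S.eq_of_fil fun m => ?_
  obtain ⟨y, hy, e⟩ := h m
  rw [e]
  have := (S.fil m).sub_mem (S.fil_mono (by omega) (hA m y hy)) (S.fil_mono (by omega) (hB m y hy))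
  simpa using this

/-- inverse of N -/
noncomputable def Ninv (x : L) : L := S.lim fun n => ((n : ℝ)⁻¹) • x

theorem p_Ninv (n : ℕ) (x : L) : S.p n (S.Ninv x) = ((n : ℝ)⁻¹) • S.p n x := by
  rw [Ninv, S.p_lim, map_smul]

theorem N_Ninv {x : L} (hx : x ∈ S.fil 1) : S.N (S.Ninv x) = x := by
  rw [← sub_eq_zero]
  apply S.ext
  intro n
  rw [map_sub, S.p_N, p_Ninv]
  cases n with
  | zero => simp [hx 0 (by omega)]
  | succ n =>
    have : ((n + 1 : ℕ) : ℝ) ≠ 0 := by positivity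
    rw [smul_smul, mul_inv_cancel₀ this, one_smul, sub_self]

/-- higher order part of `W` -/
noncomputable def Wh (K : L) : L := S.W K - S.N K

theorem Wh_contr {K K' : L} (hK : K ∈ S.fil 1) (hK' : K' ∈ S.fil 1) {m : ℕ}
    (h : K - K' ∈ S.fil m) : S.Wh K - S.Wh K' ∈ S.fil (m + 1) := by
  have h1 : ∀ k, adp K k (S.N K) - adp K' k (S.N K') ∈ S.fil (m + k) := by
    intro k
    induction k with
    | zero =>
      have := S.N_mem h
      rwa [map_sub] at this
    | succ k ih =>
      have e : adp K (k + 1) (S.N K) - adp K' (k + 1) (S.N K') =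
        ⁅K - K', adp K k (S.N K)⁆ + ⁅K', adp K k (S.N K) - adp K' k (S.N K')⁆ := by
        rw [adp, adp, sub_lie, lie_sub]
        abel
      rw [e]
      refine (S.fil _).add_mem (S.lie_mem' h (S.adp_mem hK (S.N_mem hK) k) (by omega))
        (S.lie_mem' hK' ih (by omega))
  have h2 : S.Wh K - S.Wh K' =
      S.ts (fun k => S.wtm K k - S.wtm K' k) - (S.N K - S.N K') := by
    rw [S.ts_sub (S.wtm_mem hK) (S.wtm_mem hK'), Wh, Wh, W, W]
    abel
  rw [h2]
  have hu : ∀ k, S.wtm K k - S.wtm K' k ∈ S.fil k :=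
    fun k => (S.fil k).sub_mem (S.wtm_mem hK k) (S.wtm_mem hK' k)
  have h3 := S.ts_sub_mem hu (m + 2)
  have h4 : ∑ k ∈ Finset.range (m + 2), (S.wtm K k - S.wtm K' k) - (S.N K - S.N K') ∈
      S.fil (m + 1) := by
    rw [Finset.sum_range_succ', Finset.sum_range_succ']
    have e : S.wtm K (0 + 1) - S.wtm K' (0 + 1) = S.N K - S.N K' := by simp [wtm, adp]
    have e0 : S.wtm K 0 - S.wtm K' 0 = 0 := by simp [wtm]
    rw [e, e0, add_zero, add_sub_cancel_right]
    refine Submodule.sum_mem _ fun k _ => ?_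
    rw [wtm, wtm, ← smul_sub]
    exact (S.fil _).smul_mem _ (S.fil_mono (by omega) (h1 (k + 1)))
  have := (S.fil _).add_mem (S.fil_mono (by omega : m + 1 ≤ m + 2) h3) h4
  convert this using 1
  abel

theorem W_mem {K : L} (hK : K ∈ S.fil 1) : S.W K ∈ S.fil 1 := by
  refine S.ts_mem (S.wtm_mem hK) fun k => ?_
  cases k with
  | zero => exact Submodule.zero_mem _
  | succ k => exact S.fil_mono (by omega) (S.wtm_mem hK (k + 1))

/-- the fixed point iteration -/
noncomputable def it (V : L) : ℕ → L
  | 0 => 0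
  | k + 1 => S.Ninv (V - S.Wh (it V k))

theorem Ninv_mem {a : ℕ} {x : L} (hx : x ∈ S.fil a) : S.Ninv x ∈ S.fil a := by
  intro n hn
  rw [p_Ninv, hx n hn, smul_zero]

theorem Ninv_sub (x y : L) : S.Ninv (x - y) = S.Ninv x - S.Ninv y := by
  rw [← sub_eq_zero]
  apply S.ext
  intro n
  simp only [map_sub, p_Ninv, smul_sub, sub_self]

theorem Wh_mem {K : L} (hK : K ∈ S.fil 1) : S.Wh K ∈ S.fil 1 :=
  (S.fil 1).sub_mem (S.W_mem hK) (S.N_mem hK)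

theorem exists_W {V : L} (hV : V ∈ S.fil 1) : ∃ K ∈ S.fil 1, S.W K = V := by
  have h1 : ∀ k, S.it V k ∈ S.fil 1 := by
    intro k
    induction k with
    | zero => exact Submodule.zero_mem _
    | succ k ih => exact S.Ninv_mem ((S.fil 1).sub_mem hV (S.Wh_mem ih))
  have step : ∀ (K K' : L) (m : ℕ), K ∈ S.fil 1 → K' ∈ S.fil 1 → K - K' ∈ S.fil m →
      S.Ninv (V - S.Wh K) - S.Ninv (V - S.Wh K') ∈ S.fil (m + 1) := by
    intro K K' m hK hK' h
    rw [← Ninv_sub]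
    refine S.Ninv_mem ?_
    have := (S.fil _).neg_mem (S.Wh_contr hK hK' h)
    convert this using 1
    abel
  have h2 : ∀ k, S.it V (k + 1) - S.it V k ∈ S.fil (k + 1) := by
    intro k
    induction k with
    | zero => simpa [it] using h1 1
    | succ k ih => exact step _ _ _ (h1 _) (h1 _) ih
  have h3 : ∀ j k, S.it V (k + j) - S.it V k ∈ S.fil (k + 1) := by
    intro j k
    induction j with
    | zero => simp
    | succ j ih =>
      have := (S.fil _).add_mem (S.fil_mono (by omega : k + 1 ≤ k + j + 1) (h2 (k + j))) ih
      simpa [add_assoc] using this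
  set K := S.lim (S.it V) with hKdef
  have h4 : ∀ k, K - S.it V k ∈ S.fil (k + 1) := by
    intro k n hn
    rw [map_sub, hKdef, S.p_lim, ← map_sub]
    obtain ⟨j, rfl⟩ := Nat.exists_eq_add_of_le (Nat.lt_succ_iff.1 hn)
    have := h3 j n n (by omega)
    rw [← neg_sub, map_neg, this, neg_zero]
  have hK : K ∈ S.fil 1 := by
    have := (S.fil 1).add_mem (h4 0) (h1 0)
    simpa using this
  refine ⟨K, hK, ?_⟩
  have h5 : S.Ninv (V - S.Wh K) = K := by
    refine S.eq_of_fil fun m => ?_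
    have := (S.fil m).sub_mem (S.fil_mono (by omega) (step _ _ _ hK (h1 m) (h4 m)))
      (S.fil_mono (by omega) (h4 (m + 1)))
    convert this using 1
    rw [it]
    abel
  have h6 := S.N_Ninv ((S.fil 1).sub_mem hV (S.Wh_mem hK))
  rw [h5, Wh] at h6
  have := h6
  rw [sub_sub_eq_add_sub, eq_sub_iff_add_eq, add_comm V] at this
  exact add_left_cancel this

theorem W_add {F G : L} {a b : ℕ} (ha : 1 ≤ a) (hb : 1 ≤ b) (hF : F ∈ S.fil a)
    (hG : G ∈ S.fil b) : S.W (F + G) - S.W F - S.W G ∈ S.fil (a + b) := by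
  have hF1 := S.fil_mono ha hF
  have hG1 := S.fil_mono hb hG
  have hFG := (S.fil 1).add_mem hF1 hG1
  rw [W, W, W, ← S.ts_sub (S.wtm_mem hFG) (S.wtm_mem hF1), ← S.ts_sub _ (S.wtm_mem hG1)]
  swap
  · exact fun k => (S.fil k).sub_mem (S.wtm_mem hFG k) (S.wtm_mem hF1 k)
  refine S.ts_mem (fun k => (S.fil k).sub_mem ((S.fil k).sub_mem (S.wtm_mem hFG k)
    (S.wtm_mem hF1 k)) (S.wtm_mem hG1 k)) ?_
  intro k
  cases k with
  | zero => simp [wtm]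
  | succ k =>
    rw [wtm, wtm, wtm, ← smul_sub, ← smul_sub]
    refine (S.fil _).smul_mem _ ?_
    induction k with
    | zero => simp [adp]
    | succ k ih =>
      rw [adp, adp, adp]
      set A := adp (F + G) k (S.N (F + G))
      have hB := S.adp_mem' hF (S.N_mem hF) k (by omega : a ≤ _)
      have hC := S.adp_mem' hG (S.N_mem hG) k (by omega : b ≤ _)
      set B := adp F k (S.N F)
      set C := adp G k (S.N G)
      have e : ⁅F + G, A⁆ - ⁅F, B⁆ - ⁅G, C⁆ = ⁅F, C⁆ + ⁅G, B⁆ + ⁅F + G, A - B - C⁆ := by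
        simp only [add_lie, lie_sub]
        abel
      rw [e]
      exact (S.fil _).add_mem ((S.fil _).add_mem (S.lie_mem hF hC)
        (S.lie_mem' hG hB (by omega))) (S.lie_mem' hFG ih (by omega))

theorem W_inj {K K' : L} (hK : K ∈ S.fil 1) (hK' : K' ∈ S.fil 1) {D : ℕ}
    (h : S.W K - S.W K' ∈ S.fil D) : K - K' ∈ S.fil D := by
  have : ∀ m ≤ D, K - K' ∈ S.fil m := by
    intro m
    induction m with
    | zero => exact fun _ => S.fil_zero _
    | succ m ih =>
      intro hm
      have h1 := S.Wh_contr hK hK' (ih (by omega))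
      have h2 := (S.fil _).sub_mem (S.fil_mono hm h) h1
      have e : S.W K - S.W K' - (S.Wh K - S.Wh K') = S.N (K - K') := by
        rw [Wh, Wh, map_sub]
        abel
      rw [e] at h2
      intro n hn
      have h3 := h2 n hn
      rw [S.p_N, smul_eq_zero] at h3
      rcases h3 with h3 | h3
      · have : n = 0 := by exact_mod_cast h3
        subst this
        exact ((S.fil 1).sub_mem hK hK') 0 (by omega)
      · exact h3
  exact this D le_rfl

theorem E_smul {K : L} (hK : K ∈ S.fil 1) (c : ℝ) (x : L) : S.E K (c • x) = c • S.E K x := by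
  symm
  refine S.eq_ts (S.et_mem0 hK _) fun m => ?_
  have := (S.fil m).smul_mem c (S.ts_sub_mem (S.et_mem0 hK x) m)
  convert this using 1
  rw [smul_sub, Finset.smul_sum, E]
  congr 1
  refine Finset.sum_congr rfl fun k _ => ?_
  rw [et, et, adp_smul, smul_comm]

theorem bch {F G : L} {a b : ℕ} (ha : 1 ≤ a) (hb : 1 ≤ b) (hF : F ∈ S.fil a)
    (hG : G ∈ S.fil b) : ∃ K ∈ S.fil 1, (∀ x, S.E G (S.E F x) = S.E K x) ∧
      K - F - G ∈ S.fil (a + b) := by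
  have hF1 := S.fil_mono ha hF
  have hG1 := S.fil_mono hb hG
  have hWF : S.W F ∈ S.fil a := by
    have h := S.W_add ha ha hF hF
    refine S.ts_mem (S.wtm_mem hF1) fun k => ?_
    cases k with
    | zero => exact Submodule.zero_mem _
    | succ k => exact (S.fil _).smul_mem _ (S.adp_mem' hF (S.N_mem hF) k (by omega))
  have hV : S.W G + S.E G (S.W F) ∈ S.fil 1 :=
    (S.fil 1).add_mem (S.W_mem hG1) (S.E_mem hG1 (S.W_mem hF1))
  obtain ⟨K, hK, hW⟩ := S.exists_W hV
  refine ⟨K, hK, ?_, ?_⟩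
  · refine S.unique_all (A := fun x => S.E G (S.E F x)) (B := S.E K) hV ?_ ?_ ?_ ?_ ?_ ?_ ?_ ?_
    · intro b x hx
      have h1 := S.E_sub_mem hF1 hF1 hx (by omega : b + 1 ≤ _)
      have h2 := S.E_sub_mem hG1 hG1 (S.E_mem hF1 hx) (by omega : b + 1 ≤ _)
      simpa using (S.fil _).add_mem h2 h1
    · intro b x hx
      exact S.E_sub_mem hK hK hx (by omega)
    · intro c x
      simp only [S.E_smul hF1, S.E_smul hG1]
    · exact S.E_smul hK
    · intro x y
      simp only [S.E_map_sub hF1, S.E_map_sub hG1]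
    · exact S.E_map_sub hK
    · intro x
      simp only [S.E_N hF1, S.E_N hG1, S.E_map_sub hG1, S.E_lie hG1, add_lie]
      abel
    · intro x
      rw [S.E_N hK, hW]
  · rw [sub_sub]
    refine S.W_inj hK ((S.fil 1).add_mem hF1 hG1) ?_
    rw [hW]
    have h1 := S.W_add ha hb hF hG
    have h2 := S.E_sub_mem hG1 hG hWF (by omega : a + b ≤ _)
    have := (S.fil _).sub_mem h2 h1
    convert this using 1
    abel

end BGrd

/-- Power series in the variables `u_j` (`inl j`) and `conj u_j` (`inr j`). -/
abbrev BPS := MvPowerSeries (ℤ ⊕ ℤ) ℂ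

/-- Poisson bracket of power series with finitely many modes. -/
noncomputable def bpb (R : Finset ℤ) (f g : BPS) : BPS :=
  ∑ j ∈ R, (MvPowerSeries.pderiv ℂ (Sum.inl j) f * MvPowerSeries.pderiv ℂ (Sum.inr j) g -
    MvPowerSeries.pderiv ℂ (Sum.inr j) f * MvPowerSeries.pderiv ℂ (Sum.inl j) g)

theorem bpd_comm (a b : ℤ ⊕ ℤ) (f : BPS) :
    MvPowerSeries.pderiv ℂ a (MvPowerSeries.pderiv ℂ b f) =
      MvPowerSeries.pderiv ℂ b (MvPowerSeries.pderiv ℂ a f) := by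
  ext n
  simp only [MvPowerSeries.coeff_pderiv]
  rw [add_right_comm]
  by_cases h : a = b
  · subst h; rfl
  · simp [h, Ne.symm h]
    ring

theorem bpb_jacobi (R : Finset ℤ) (f g h : BPS) :
    bpb R f (bpb R g h) = bpb R (bpb R f g) h + bpb R g (bpb R f h) := by
  have key : ∀ f g h : BPS, bpb R f (bpb R g h) = ∑ j ∈ R, ∑ k ∈ R,
     (MvPowerSeries.pderiv ℂ (Sum.inl j) f * MvPowerSeries.pderiv ℂ (Sum.inr j)
     (MvPowerSeries.pderiv ℂ (Sum.inl k) g * MvPowerSeries.pderiv ℂ (Sum.inr k) h -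
    MvPowerSeries.pderiv ℂ (Sum.inr k) g * MvPowerSeries.pderiv ℂ (Sum.inl k) h) -
    MvPowerSeries.pderiv ℂ (Sum.inr j) f * MvPowerSeries.pderiv ℂ (Sum.inl j)
     (MvPowerSeries.pderiv ℂ (Sum.inl k) g * MvPowerSeries.pderiv ℂ (Sum.inr k) h -
    MvPowerSeries.pderiv ℂ (Sum.inr k) g * MvPowerSeries.pderiv ℂ (Sum.inl k) h)) := by
    intro f g h
    simp only [bpb, map_sum, Finset.mul_sum, ← Finset.sum_sub_distrib]
  have anti : ∀ f g : BPS, bpb R f g = - bpb R g f := by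
    intro f g
    simp only [bpb, ← Finset.sum_neg_distrib]
    refine Finset.sum_congr rfl fun j _ => ?_
    ring
  rw [anti (bpb R f g) h, key, key, key, ← sub_eq_zero]
  simp only [← Finset.sum_neg_distrib, ← Finset.sum_add_distrib, ← Finset.sum_sub_distrib]
  have two : ∀ T : ℤ → ℤ → BPS, (∀ j k, T j k + T k j = 0) → ∑ j ∈ R, ∑ k ∈ R, T j k = 0 := by
    intro T hT
    have h1 : ∑ j ∈ R, ∑ k ∈ R, T j k + ∑ j ∈ R, ∑ k ∈ R, T j k = 0 := by
      conv_lhs => arg 2; rw [Finset.sum_comm]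
      simp only [← Finset.sum_add_distrib, hT, Finset.sum_const_zero]
    rw [← two_mul] at h1
    have h2 : IsUnit (2 : BPS) := by
      have : IsUnit (MvPowerSeries.C (σ := ℤ ⊕ ℤ) (2 : ℂ)) :=
        (isUnit_iff_ne_zero.2 two_ne_zero).map _
      rwa [map_ofNat] at this
    exact (h2.mul_right_eq_zero).1 h1
  apply two
  intro j k
  simp only [map_sub, Derivation.leibniz, smul_eq_mul]
  simp only [bpd_comm (Sum.inr k) (Sum.inr j), bpd_comm (Sum.inr k) (Sum.inl j),
    bpd_comm (Sum.inl k) (Sum.inr j), bpd_comm (Sum.inl k) (Sum.inl j)]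
  ring

theorem bmom_add (a b c d : Idx) : mom (a + c) (b + d) = mom a b + mom c d := by
  unfold mom
  rw [Finsupp.sum_add_index' (by simp) (by intros; push_cast; ring),
    Finsupp.sum_add_index' (by simp) (by intros; push_cast; ring)]
  ring

theorem bmom_l (j : ℤ) : mom (Finsupp.single j 1) 0 = j := by
  simp [mom]

theorem bmom_r (j : ℤ) : mom 0 (Finsupp.single j 1) = -j := by
  simp [mom]

theorem bmom_al (a b : Idx) (j : ℤ) : mom (a + Finsupp.single j 1) b = mom a b + j := by
  have := bmom_add a b (Finsupp.single j 1) 0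
  rwa [add_zero, bmom_l] at this

theorem bmom_ar (a b : Idx) (j : ℤ) : mom a (b + Finsupp.single j 1) = mom a b - j := by
  have := bmom_add a b 0 (Finsupp.single j 1)
  rwa [add_zero, bmom_r] at this

theorem bwt_add (a b : Idx) : wt (a + b) = wt a + wt b := by
  unfold wt
  exact Finsupp.sum_add_index' (by simp) (by intros; rfl)

theorem bwt_single (j : ℤ) : wt (Finsupp.single j 1) = 1 := by simp [wt]

/-- A bound for the momenta. -/
noncomputable def bM (a b : Idx) : ℤ :=
  (a.sum fun j n => |j| * (n : ℤ)) + (b.sum fun j n => |j| * (n : ℤ))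

theorem bM_add (a b c d : Idx) : bM (a + c) (b + d) = bM a b + bM c d := by
  unfold bM
  rw [Finsupp.sum_add_index' (by simp) (by intros; push_cast; ring),
    Finsupp.sum_add_index' (by simp) (by intros; push_cast; ring)]
  ring

theorem bM_al (a b : Idx) (j : ℤ) : bM (a + Finsupp.single j 1) b = bM a b + |j| := by
  have := bM_add a b (Finsupp.single j 1) 0
  rw [add_zero] at this
  rw [this]
  simp [bM]

theorem bM_ar (a b : Idx) (j : ℤ) : bM a (b + Finsupp.single j 1) = bM a b + |j| := by
  have := bM_add a b 0 (Finsupp.single j 1)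
  rw [add_zero] at this
  rw [this]
  simp [bM]

theorem bM_nonneg (a b : Idx) : 0 ≤ bM a b :=
  add_nonneg (Finset.sum_nonneg fun _ _ => by positivity)
    (Finset.sum_nonneg fun _ _ => by positivity)

theorem bmom_le (a b : Idx) : |mom a b| ≤ bM a b := by
  unfold mom bM
  refine (abs_sub _ _).trans (add_le_add ?_ ?_)
  · refine (Finset.abs_sum_le_sum_abs _ _).trans (Finset.sum_le_sum fun j _ => ?_)
    rw [abs_mul, Nat.abs_cast]
  · refine (Finset.abs_sum_le_sum_abs _ _).trans (Finset.sum_le_sum fun j _ => ?_)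
    rw [abs_mul, Nat.abs_cast]

/-- Half of a bracket term. -/
noncomputable def btA (F G : Coeffs) (α β : Idx) (x : ℤ × (Idx × Idx) × (Idx × Idx)) : ℂ :=
  if mom x.2.1.1 x.2.1.2 = 0 ∧ mom x.2.2.1 x.2.2.2 = 0 ∧
      α = x.2.1.1 + x.2.2.1 - Finsupp.single x.1 1 ∧
      β = x.2.1.2 + x.2.2.2 - Finsupp.single x.1 1 then
    F x.2.1.1 x.2.1.2 * G x.2.2.1 x.2.2.2 *
      ((x.2.1.1 x.1 : ℂ) * (x.2.2.2 x.1 : ℂ))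
  else 0

/-- Swapping the two factors. -/
def bsw : (ℤ × (Idx × Idx) × (Idx × Idx)) ≃ (ℤ × (Idx × Idx) × (Idx × Idx)) :=
  Equiv.prodCongr (Equiv.refl _) (Equiv.prodComm _ _)

theorem bterm_eq (F G : Coeffs) (α β : Idx) (x : ℤ × (Idx × Idx) × (Idx × Idx)) :
    bracketTerm F G α β x = btA F G α β x - btA G F α β (bsw x) := by
  obtain ⟨j, ⟨a, b⟩, ⟨c, d⟩⟩ := x
  simp only [bracketTerm, btA, bsw, Equiv.prodCongr_apply, Prod.map, Equiv.refl_apply,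
    Equiv.prodComm_apply, Prod.swap]
  rw [add_comm c a, add_comm d b]
  by_cases h : mom a b = 0 ∧ mom c d = 0 ∧ α = a + c - Finsupp.single j 1 ∧
    β = b + d - Finsupp.single j 1
  · rw [if_pos h, if_pos h, if_pos ⟨h.2.1, h.1, h.2.2⟩]
    ring
  · rw [if_neg h, if_neg h, if_neg (fun h' => h ⟨h'.2.1, h'.1, h'.2.2⟩)]
    ring

theorem bsingle_sub {a : Idx} {j : ℤ} (h : a j ≠ 0) :
    a = (a - Finsupp.single j 1) + Finsupp.single j 1 := by
  refine (tsub_add_cancel_of_le ?_).symm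
  rw [Finsupp.single_le_iff]
  omega

theorem bsub_l (a c : Idx) (j : ℤ) : a + Finsupp.single j 1 + c - Finsupp.single j 1 = a + c := by
  rw [add_right_comm, add_tsub_cancel_right]

theorem bsub_r (a c : Idx) (j : ℤ) : a + (c + Finsupp.single j 1) - Finsupp.single j 1 = a + c := by
  rw [← add_assoc, add_tsub_cancel_right]

theorem btA_ne {F G : Coeffs} {α β : Idx} {x : ℤ × (Idx × Idx) × (Idx × Idx)}
    (h : btA F G α β x ≠ 0) : ∃ j a b c d,
      x = (j, (a + Finsupp.single j 1, b), (c, d + Finsupp.single j 1)) ∧ α = a + c ∧ β = b + d ∧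
      mom a b + j = 0 ∧ mom c d - j = 0 ∧ F (a + Finsupp.single j 1) b ≠ 0 ∧
      G c (d + Finsupp.single j 1) ≠ 0 := by
  obtain ⟨j, ⟨a, b⟩, ⟨c, d⟩⟩ := x
  simp only [btA] at h
  split_ifs at h with hc
  · simp only [mul_ne_zero_iff, Nat.cast_ne_zero] at h
    obtain ⟨⟨h1, h2⟩, h3, h4⟩ := h
    obtain ⟨m1, m2, e1, e2⟩ := hc
    rw [bsingle_sub h3] at m1 e1 h1
    rw [bsingle_sub h4] at m2 e2 h2
    rw [bsub_l] at e1
    rw [bsub_r] at e2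
    rw [bmom_al] at m1
    rw [bmom_ar] at m2
    refine ⟨j, _, b, c, _, ?_, e1, e2, m1, m2, h1, h2⟩
    rw [← bsingle_sub h3, ← bsingle_sub h4]
  · exact absurd rfl h

theorem btA_j {α β a b c d : Idx} {j : ℤ} (h1 : α = a + c) (h2 : β = b + d)
    (h : mom a b + j = 0) : |j| ≤ bM α β := by
  subst h1 h2
  rw [bM_add]
  have e : j = - mom a b := by omega
  rw [e, abs_neg]
  have := bmom_le a b
  have := bM_nonneg c d
  omega

theorem btA_fin (F G : Coeffs) (α β : Idx) : (Function.support (btA F G α β)).Finite := by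
  refine Set.Finite.subset (Finset.finite_toSet
    ((Finset.Icc (-(bM α β)) (bM α β) ×ˢ (Finset.Iic α ×ˢ Finset.Iic β) ×ˢ
      (Finset.Iic α ×ˢ Finset.Iic β)).image (fun y =>
      (y.1, (y.2.1.1 + Finsupp.single y.1 1, y.2.1.2),
        (y.2.2.1, y.2.2.2 + Finsupp.single y.1 1))))) ?_
  intro x hx
  obtain ⟨j, a, b, c, d, rfl, h1, h2, m1, m2, -, -⟩ := btA_ne hx
  have hj := btA_j h1 h2 m1
  rw [abs_le] at hj
  rw [Finset.mem_coe, Finset.mem_image]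
  refine ⟨(j, (a, b), (c, d)), ?_, rfl⟩
  subst h1 h2
  simp [hj]

theorem bterm_fin (F G : Coeffs) (α β : Idx) :
    (Function.support (bracketTerm F G α β)).Finite := by
  have : bracketTerm F G α β = fun x => btA F G α β x - btA G F α β (bsw x) :=
    funext (bterm_eq F G α β)
  rw [this]
  refine Set.Finite.subset ((btA_fin F G α β).union
    ((btA_fin G F α β).preimage (bsw.injective.injOn))) ?_
  intro x hx
  by_contra hn
  simp only [Set.mem_union, Function.mem_support, Set.mem_preimage, not_or, not_not] at hn
  simp [hn.1, hn.2] at hx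

theorem bterm_ne {F G : Coeffs} {α β : Idx} {x : ℤ × (Idx × Idx) × (Idx × Idx)}
    (h : bracketTerm F G α β x ≠ 0) :
      mom α β = 0 ∧
      wt x.2.1.1 + wt x.2.1.2 + (wt x.2.2.1 + wt x.2.2.2) = wt α + wt β + 2 ∧
      F x.2.1.1 x.2.1.2 ≠ 0 ∧ G x.2.2.1 x.2.2.2 ≠ 0 := by
  rw [bterm_eq] at h
  by_cases h0 : btA F G α β x = 0
  · have h1 : btA G F α β (bsw x) ≠ 0 := by
      intro h1
      simp [h0, h1] at h
    obtain ⟨j, a, b, c, d, e, rfl, rfl, m1, m2, f1, f2⟩ := btA_ne h1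
    have e' : x = bsw (j, (a + Finsupp.single j 1, b), (c, d + Finsupp.single j 1)) := by
      rw [← e]; rfl
    subst e'
    refine ⟨by rw [bmom_add]; omega, ?_, f2, f1⟩
    simp only [bsw, Equiv.prodCongr_apply, Prod.map, Equiv.refl_apply,
      Equiv.prodComm_apply, Prod.swap, bwt_add, bwt_single]
    omega
  · obtain ⟨j, a, b, c, d, rfl, rfl, rfl, m1, m2, f1, f2⟩ := btA_ne h0
    refine ⟨by rw [bmom_add]; omega, ?_, f1, f2⟩
    simp only [bwt_add, bwt_single]
    omega

theorem bracket_add_left (F F' G : Coeffs) : bracket (F + F') G = bracket F G + bracket F' G := by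
  funext α β
  simp only [bracket, Pi.add_apply]
  rw [← mul_add, ← finsum_add_distrib (bterm_fin F G α β) (bterm_fin F' G α β)]
  congr 2
  funext x
  simp only [bracketTerm, Pi.add_apply]
  split_ifs
  · ring
  · simp

theorem bracket_smul_left (r : ℝ) (F G : Coeffs) : bracket (r • F) G = r • bracket F G := by
  funext α β
  simp only [bracket, Pi.smul_apply, Complex.real_smul]
  rw [mul_left_comm, mul_finsum' _ _ (bterm_fin F G α β)]
  congr 2
  funext x
  simp only [bracketTerm, Pi.smul_apply, Complex.real_smul]
  split_ifs
  · ring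
  · simp

theorem bracket_anti (F G : Coeffs) : bracket F G = - bracket G F := by
  funext α β
  simp only [bracket, Pi.neg_apply]
  rw [← mul_neg, ← finsum_neg_distrib]
  congr 1
  rw [← finsum_comp_equiv bsw]
  congr 1
  funext x
  rw [bterm_eq, bterm_eq]
  have : bsw (bsw x) = x := rfl
  rw [this]
  ring

theorem bracket_mom (F G : Coeffs) (α β : Idx) (h : mom α β ≠ 0) : bracket F G α β = 0 := by
  have : ∀ x, bracketTerm F G α β x = 0 := by
    intro x
    by_contra hx
    exact h (bterm_ne hx).1
  simp [bracket, this]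

theorem bracket_low {F G : Coeffs} {a b : ℕ} (hF : ∀ α β, wt α + wt β < a + 2 → F α β = 0)
    (hG : ∀ α β, wt α + wt β < b + 2 → G α β = 0) (α β : Idx) (h : wt α + wt β < a + b + 2) :
    bracket F G α β = 0 := by
  have : ∀ x, bracketTerm F G α β x = 0 := by
    intro x
    by_contra hx
    obtain ⟨_, h1, h2, h3⟩ := bterm_ne hx
    have h4 : ¬ (wt x.2.1.1 + wt x.2.1.2 < a + 2) := fun h' => h2 (hF _ _ h')
    have h5 : ¬ (wt x.2.2.1 + wt x.2.2.2 < b + 2) := fun h' => h3 (hG _ _ h')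
    omega
  simp [bracket, this]

/-- Swapping `α` and `β`. -/
def bcj : (ℤ × (Idx × Idx) × (Idx × Idx)) ≃ (ℤ × (Idx × Idx) × (Idx × Idx)) :=
  Equiv.prodCongr (Equiv.refl _) (Equiv.prodCongr (Equiv.prodComm _ _) (Equiv.prodComm _ _))

theorem bmom_swap (a b : Idx) : mom a b = - mom b a := by
  unfold mom
  ring

theorem bracket_real {F G : Coeffs} (hF : ∀ α β, F α β = (starRingEnd ℂ) (F β α))
    (hG : ∀ α β, G α β = (starRingEnd ℂ) (G β α)) (α β : Idx) :
    bracket F G α β = (starRingEnd ℂ) (bracket F G β α) := by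
  simp only [bracket]
  rw [map_mul, Complex.conj_I, neg_mul, ← mul_neg]
  congr 1
  have e := AddMonoidHom.map_finsum ((starRingEnd ℂ) : ℂ →+ ℂ) (bterm_fin F G β α)
  simp only [AddMonoidHom.coe_coe] at e
  rw [e, ← finsum_neg_distrib, ← finsum_comp_equiv bcj]
  congr 1
  funext x
  obtain ⟨j, ⟨a, b⟩, ⟨c, d⟩⟩ := x
  simp only [bracketTerm, bcj, Equiv.prodCongr_apply, Prod.map, Equiv.refl_apply,
    Equiv.prodComm_apply, Prod.swap]
  by_cases h : mom a b = 0 ∧ mom c d = 0 ∧ β = a + c - Finsupp.single j 1 ∧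
    α = b + d - Finsupp.single j 1
  · have h' : mom b a = 0 ∧ mom d c = 0 ∧ α = b + d - Finsupp.single j 1 ∧
      β = a + c - Finsupp.single j 1 := ⟨by rw [bmom_swap, h.1, neg_zero],
        by rw [bmom_swap, h.2.1, neg_zero], h.2.2.2, h.2.2.1⟩
    rw [if_pos h, if_pos h', hF b a, hG d c]
    simp only [map_mul, map_sub, Complex.conj_natCast]
    ring
  · have h' : ¬ (mom b a = 0 ∧ mom d c = 0 ∧ α = b + d - Finsupp.single j 1 ∧
      β = a + c - Finsupp.single j 1) := fun h' => h ⟨by rw [bmom_swap, h'.1, neg_zero],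
        by rw [bmom_swap, h'.2.1, neg_zero], h'.2.2.2, h'.2.2.1⟩
    rw [if_neg h, if_neg h']
    simp

/-- The degree operator. -/
noncomputable def bN (F : Coeffs) : Coeffs := fun α β => ((wt α : ℝ) + (wt β : ℝ) - 2) • F α β

theorem bN_bracket (F G : Coeffs) :
    bN (bracket F G) = bracket (bN F) G + bracket F (bN G) := by
  funext α β
  simp only [bracket, bN, Pi.add_apply, Complex.real_smul]
  rw [mul_left_comm, ← mul_add, ← finsum_add_distrib (bterm_fin (bN F) G α β) (bterm_fin F (bN G) α β),
    mul_finsum' _ _ (bterm_fin F G α β)]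
  congr 2
  funext x
  have e : bracketTerm (bN F) G α β x + bracketTerm F (bN G) α β x =
    (((wt x.2.1.1 : ℝ) + wt x.2.1.2 + (wt x.2.2.1 + wt x.2.2.2) - 4 : ℝ) : ℂ) *
      bracketTerm F G α β x := by
    simp only [bracketTerm, bN, Complex.real_smul]
    split_ifs
    · push_cast
      ring
    · simp
  change _ = bracketTerm (bN F) G α β x + bracketTerm F (bN G) α β x
  rw [e]
  by_cases h : bracketTerm F G α β x = 0
  · simp [h]
  · have h1 := (bterm_ne h).2.1
    have h2 : (wt x.2.1.1 : ℝ) + wt x.2.1.2 + (wt x.2.2.1 + wt x.2.2.2) = wt α + wt β + 2 := by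
      exact_mod_cast h1
    rw [h2]
    congr 2
    ring

/-- Left part of a multi-index. -/
noncomputable def bl (s : ℤ ⊕ ℤ →₀ ℕ) : Idx := (Finsupp.sumFinsuppAddEquivProdFinsupp s).1

/-- Right part of a multi-index. -/
noncomputable def br (s : ℤ ⊕ ℤ →₀ ℕ) : Idx := (Finsupp.sumFinsuppAddEquivProdFinsupp s).2

/-- Joining two multi-indices. -/
noncomputable def bj (α β : Idx) : ℤ ⊕ ℤ →₀ ℕ := Finsupp.sumFinsuppAddEquivProdFinsupp.symm (α, β)

theorem bl_bj (α β : Idx) : bl (bj α β) = α := by simp [bl, bj]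

theorem br_bj (α β : Idx) : br (bj α β) = β := by simp [br, bj]

theorem bl_add (s t : ℤ ⊕ ℤ →₀ ℕ) : bl (s + t) = bl s + bl t := by
  ext k
  rfl

theorem br_add (s t : ℤ ⊕ ℤ →₀ ℕ) : br (s + t) = br s + br t := by
  ext k
  rfl

theorem bl_apply (s : ℤ ⊕ ℤ →₀ ℕ) (j : ℤ) : bl s j = s (Sum.inl j) := rfl

theorem br_apply (s : ℤ ⊕ ℤ →₀ ℕ) (j : ℤ) : br s j = s (Sum.inr j) := rfl

theorem bl_inl (j : ℤ) : bl (Finsupp.single (Sum.inl j) 1) = Finsupp.single j 1 := by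
  ext k
  simp [bl_apply, Finsupp.single_apply]

theorem bl_inr (j : ℤ) : bl (Finsupp.single (Sum.inr j) 1) = 0 := by
  ext k
  simp [bl_apply, Finsupp.single_apply]

theorem br_inr (j : ℤ) : br (Finsupp.single (Sum.inr j) 1) = Finsupp.single j 1 := by
  ext k
  simp [br_apply, Finsupp.single_apply]

theorem br_inl (j : ℤ) : br (Finsupp.single (Sum.inl j) 1) = 0 := by
  ext k
  simp [br_apply, Finsupp.single_apply]

theorem bext {s t : ℤ ⊕ ℤ →₀ ℕ} (h1 : bl s = bl t) (h2 : br s = br t) : s = t :=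
  Finsupp.sumFinsuppAddEquivProdFinsupp.injective (Prod.ext h1 h2)

/-- The power series of a coefficient family. -/
noncomputable def bPS (F : Coeffs) : BPS := fun s => F (bl s) (br s)

theorem bPS_coeff (F : Coeffs) (s : ℤ ⊕ ℤ →₀ ℕ) :
    MvPowerSeries.coeff s (bPS F) = F (bl s) (br s) := rfl

/-- The reindexing map. -/
noncomputable def bphi (y : ℤ × (ℤ ⊕ ℤ →₀ ℕ) × (ℤ ⊕ ℤ →₀ ℕ)) : ℤ × (Idx × Idx) × (Idx × Idx) :=
  (y.1, (bl y.2.1 + Finsupp.single y.1 1, br y.2.1), (bl y.2.2, br y.2.2 + Finsupp.single y.1 1))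

theorem bphi_inj : Function.Injective bphi := by
  rintro ⟨j, t, u⟩ ⟨j', t', u'⟩ h
  simp only [bphi, Prod.mk.injEq] at h
  obtain ⟨rfl, ⟨h1, h2⟩, h3, h4⟩ := h
  rw [bext (add_right_cancel h1) h2, bext h3 (add_right_cancel h4)]

theorem btA_sum {F G : Coeffs} (hF : ∀ α β, mom α β ≠ 0 → F α β = 0)
    (hG : ∀ α β, mom α β ≠ 0 → G α β = 0) (α β : Idx) (R : Finset ℤ)
    (hR : ∀ j, |j| ≤ bM α β → j ∈ R) :
    ∑ᶠ x, btA F G α β x = ∑ j ∈ R, MvPowerSeries.coeff (bj α β)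
      (MvPowerSeries.pderiv ℂ (Sum.inl j) (bPS F) *
        MvPowerSeries.pderiv ℂ (Sum.inr j) (bPS G)) := by
  rw [finsum_eq_sum_of_support_subset (s := (R ×ˢ
    Finset.HasAntidiagonal.antidiagonal (bj α β)).image bphi)]
  · rw [Finset.sum_image bphi_inj.injOn, Finset.sum_product]
    refine Finset.sum_congr rfl fun j _ => ?_
    rw [MvPowerSeries.coeff_mul]
    refine Finset.sum_congr rfl fun p hp => ?_
    obtain ⟨t, u⟩ := p
    have hp' : t + u = bj α β := by simpa using hp
    have e1 : α = bl t + bl u := by rw [← bl_add, hp', bl_bj]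
    have e2 : β = br t + br u := by rw [← br_add, hp', br_bj]
    simp only [MvPowerSeries.coeff_pderiv, bPS_coeff, bl_add, br_add, bl_inl, bl_inr, br_inl,
      br_inr, add_zero]
    simp only [btA, bphi, bsub_l, bsub_r]
    by_cases m1 : mom (bl t + Finsupp.single j 1) (br t) = 0
    · by_cases m2 : mom (bl u) (br u + Finsupp.single j 1) = 0
      · rw [if_pos ⟨m1, m2, e1, e2⟩]
        simp only [Finsupp.add_apply, Finsupp.single_eq_same, bl_apply, br_apply]
        push_cast
        ring
      · rw [if_neg (fun h => m2 h.2.1), hG _ _ m2]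
        ring
    · rw [if_neg (fun h => m1 h.1), hF _ _ m1]
      ring
  · intro x hx
    obtain ⟨j, a, b, c, d, rfl, h1, h2, m1, m2, -, -⟩ := btA_ne hx
    have hj := hR j (btA_j h1 h2 m1)
    rw [Finset.mem_coe, Finset.mem_image]
    refine ⟨(j, bj a b, bj c d), ?_, ?_⟩
    · rw [Finset.mem_product]
      refine ⟨hj, ?_⟩
      simp only [Finset.HasAntidiagonal.mem_antidiagonal]
      rw [h1, h2]
      apply bext
      · simp [bl_add, bl_bj]
      · simp [br_add, br_bj]
    · simp [bphi, bl_bj, br_bj]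

theorem bracket_eq {F G : Coeffs} (hF : ∀ α β, mom α β ≠ 0 → F α β = 0)
    (hG : ∀ α β, mom α β ≠ 0 → G α β = 0) (α β : Idx) (R : Finset ℤ)
    (hR : ∀ j, |j| ≤ bM α β → j ∈ R) :
    bracket F G α β = Complex.I * MvPowerSeries.coeff (bj α β) (bpb R (bPS F) (bPS G)) := by
  have h1 : ∑ᶠ x, bracketTerm F G α β x = ∑ᶠ x, btA F G α β x - ∑ᶠ x, btA G F α β x := by
    rw [← finsum_comp_equiv bsw (f := btA G F α β), ← finsum_sub_distrib (btA_fin F G α β)]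
    · congr 1
      funext x
      exact bterm_eq F G α β x
    · exact (btA_fin G F α β).preimage (bsw.injective.injOn)
  rw [bracket, h1, btA_sum hF hG α β R hR, btA_sum hG hF α β R hR, bpb, map_sum,
    ← Finset.sum_sub_distrib]
  congr 1
  refine Finset.sum_congr rfl fun j _ => ?_
  rw [map_sub, mul_comm (MvPowerSeries.pderiv ℂ (Sum.inl j) (bPS G))]

/-- Momentum conservation for power series. -/
def bMC (f : BPS) : Prop := ∀ s, mom (bl s) (br s) ≠ 0 → MvPowerSeries.coeff s f = 0

theorem bcoeff_zero {f g : BPS} (hf : bMC f) (s : ℤ ⊕ ℤ →₀ ℕ) (j : ℤ)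
    (hj : ¬ |j| ≤ bM (bl s) (br s)) :
    MvPowerSeries.coeff s (MvPowerSeries.pderiv ℂ (Sum.inl j) f *
      MvPowerSeries.pderiv ℂ (Sum.inr j) g - MvPowerSeries.pderiv ℂ (Sum.inr j) f *
      MvPowerSeries.pderiv ℂ (Sum.inl j) g) = 0 := by
  rw [map_sub, MvPowerSeries.coeff_mul, MvPowerSeries.coeff_mul, Finset.sum_eq_zero,
    Finset.sum_eq_zero, sub_zero]
  all_goals
    rintro ⟨t, u⟩ hp
    have hp' : t + u = s := by simpa using hp
    subst hp'
    rw [bl_add, br_add, bM_add] at hj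
    have h1 := bmom_le (bl t) (br t)
    have h2 := bM_nonneg (bl u) (br u)
    rw [MvPowerSeries.coeff_pderiv, hf]
    · simp
  · simp only [bl_add, br_add, bl_inr, br_inr, add_zero, bmom_ar]
    intro h
    have : mom (bl t) (br t) = j := by omega
    rw [this] at h1
    omega
  · simp only [bl_add, br_add, bl_inl, br_inl, add_zero, bmom_al]
    intro h
    have : mom (bl t) (br t) = -j := by omega
    rw [this, abs_neg] at h1
    omega

theorem bpb_indep {f g : BPS} (hf : bMC f) (s : ℤ ⊕ ℤ →₀ ℕ) (R R' : Finset ℤ) (h : R ⊆ R')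
    (hR : ∀ j, |j| ≤ bM (bl s) (br s) → j ∈ R) :
    MvPowerSeries.coeff s (bpb R f g) = MvPowerSeries.coeff s (bpb R' f g) := by
  rw [bpb, bpb, map_sum, map_sum]
  refine Finset.sum_subset h fun j _ hj => ?_
  exact bcoeff_zero hf s j fun h' => hj (hR j h')

theorem bpb_congr {f g g' : BPS} (s : ℤ ⊕ ℤ →₀ ℕ) (R : Finset ℤ) (B : ℤ)
    (hR : ∀ j ∈ R, |j| ≤ B)
    (hg : ∀ t, bM (bl t) (br t) ≤ bM (bl s) (br s) + B →
      MvPowerSeries.coeff t g = MvPowerSeries.coeff t g') :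
    MvPowerSeries.coeff s (bpb R f g) = MvPowerSeries.coeff s (bpb R f g') := by
  rw [bpb, bpb, map_sum, map_sum]
  refine Finset.sum_congr rfl fun j hj => ?_
  have hj' := hR j hj
  simp only [map_sub, MvPowerSeries.coeff_mul, MvPowerSeries.coeff_pderiv]
  congr 1
  all_goals
    refine Finset.sum_congr rfl ?_
    rintro ⟨t, u⟩ hp
    have hp' : t + u = s := by simpa using hp
    subst hp'
    simp only
    rw [hg]
    simp only [bl_add, br_add, bl_inr, br_inr, bl_inl, br_inl, add_zero, bM_ar, bM_al, bM_add]
    have h2 := bM_nonneg (bl t) (br t)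
    omega

theorem bPS_MC {F : Coeffs} (hF : ∀ α β, mom α β ≠ 0 → F α β = 0) : bMC (bPS F) :=
  fun s hs => hF _ _ hs

theorem bpb_smul (R : Finset ℤ) (f g : BPS) (c : ℂ) : bpb R f (c • g) = c • bpb R f g := by
  have h : ∀ i, MvPowerSeries.pderiv ℂ i (c • g) = c • MvPowerSeries.pderiv ℂ i g :=
    fun i => (MvPowerSeries.pderiv ℂ i).map_smul c g
  simp only [bpb, h, Finset.smul_sum, mul_smul_comm, smul_sub]

theorem bracket_bracket {F G H : Coeffs} (hF : ∀ α β, mom α β ≠ 0 → F α β = 0)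
    (hG : ∀ α β, mom α β ≠ 0 → G α β = 0) (hH : ∀ α β, mom α β ≠ 0 → H α β = 0) (α β : Idx) :
    bracket F (bracket G H) α β = Complex.I * (Complex.I * MvPowerSeries.coeff (bj α β)
      (bpb (Finset.Icc (-(2 * bM α β)) (2 * bM α β)) (bPS F)
        (bpb (Finset.Icc (-(2 * bM α β)) (2 * bM α β)) (bPS G) (bPS H)))) := by
  have h0 := bM_nonneg α β
  rw [bracket_eq hF (bracket_mom G H) α β (Finset.Icc (-(bM α β)) (bM α β))
    (fun j hj => by rw [Finset.mem_Icc]; exact abs_le.1 hj)]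
  congr 1
  rw [bpb_congr (g' := Complex.I • bpb (Finset.Icc (-(2 * bM α β)) (2 * bM α β)) (bPS G) (bPS H))
    _ _ (bM α β) (fun j hj => by rw [Finset.mem_Icc] at hj; exact abs_le.2 hj)]
  · rw [bpb_smul, map_smul, smul_eq_mul]
    congr 1
    refine bpb_indep (bPS_MC hF) _ _ _ ?_ ?_
    · exact Finset.Icc_subset_Icc (by omega) (by omega)
    · intro j hj
      rw [bl_bj, br_bj] at hj
      rw [Finset.mem_Icc]
      exact abs_le.1 hj
  · intro t ht
    rw [bl_bj, br_bj] at ht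
    rw [bPS_coeff, bracket_eq hG hH _ _ (Finset.Icc (-(2 * bM α β)) (2 * bM α β)), map_smul,
      smul_eq_mul]
    · congr 3
      apply bext
      · rw [bl_bj]
      · rw [br_bj]
    · intro j hj
      rw [Finset.mem_Icc]
      exact abs_le.1 (by omega)

theorem bpb_anti (R : Finset ℤ) (f g : BPS) : bpb R f g = - bpb R g f := by
  simp only [bpb, ← Finset.sum_neg_distrib]
  refine Finset.sum_congr rfl fun j _ => ?_
  ring

theorem bracket_jacobi {F G H : Coeffs} (hF : ∀ α β, mom α β ≠ 0 → F α β = 0)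
    (hG : ∀ α β, mom α β ≠ 0 → G α β = 0) (hH : ∀ α β, mom α β ≠ 0 → H α β = 0) :
    bracket F (bracket G H) = bracket (bracket F G) H + bracket G (bracket F H) := by
  rw [bracket_anti (bracket F G) H]
  funext α β
  simp only [Pi.add_apply, Pi.neg_apply]
  rw [bracket_bracket hF hG hH, bracket_bracket hH hF hG, bracket_bracket hG hF hH, bpb_jacobi,
    bpb_anti _ (bpb _ _ _) (bPS H), map_add, map_neg]
  ring

/-- The real vector space of formal Hamiltonians. -/
def BL : Submodule ℝ Coeffs where
  carrier := {H | InF H}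
  add_mem' := by
    rintro a b ⟨a1, a2, a3, a4, a5⟩ ⟨b1, b2, b3, b4, b5⟩
    refine ⟨by simp [a1, b1], by simp [a2, b2], by simp [a3, b3], ?_, ?_⟩
    · intro α β
      rw [Pi.add_apply, Pi.add_apply, a4, b4]
      simp
    · intro α β h
      simp [a5 α β h, b5 α β h]
  zero_mem' := by simp [InF]
  smul_mem' := by
    rintro c a ⟨a1, a2, a3, a4, a5⟩
    refine ⟨by simp [a1], by simp [a2], by simp [a3], ?_, ?_⟩
    · intro α β
      rw [Pi.smul_apply, Pi.smul_apply, a4]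
      simp
    · intro α β h
      simp [a5 α β h]

theorem bwt_zero_iff (a : Idx) : wt a = 0 ↔ a = 0 := by
  constructor
  · intro h
    ext j
    unfold wt Finsupp.sum at h
    rw [Finset.sum_eq_zero_iff] at h
    by_contra hj
    exact hj (h j (Finsupp.mem_support_iff.2 hj))
  · rintro rfl
    simp [wt]

theorem bwt_one {a : Idx} (h : wt a = 1) : ∃ j, a = Finsupp.single j 1 := by
  have h0 : a ≠ 0 := by
    rintro rfl
    simp [wt] at h
  obtain ⟨j, hj⟩ := Finsupp.ne_iff.1 h0
  have e := bsingle_sub (j := j) hj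
  rw [e, bwt_add, bwt_single] at h
  have : a - Finsupp.single j 1 = 0 := (bwt_zero_iff _).1 (by omega)
  rw [this, zero_add] at e
  exact ⟨j, e⟩

theorem InF_low {H : Coeffs} (hH : InF H) (α β : Idx) (h : wt α + wt β < 0 + 2) : H α β = 0 := by
  obtain ⟨a1, a2, a3, a4, a5⟩ := hH
  by_cases ha : wt α = 0
  · rw [bwt_zero_iff] at ha
    subst ha
    by_cases hb : wt β = 0
    · rw [bwt_zero_iff] at hb
      subst hb
      exact a1
    · obtain ⟨j, rfl⟩ := bwt_one (by omega : wt β = 1)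
      by_cases hj : j = 0
      · subst hj; exact a3
      · exact a5 _ _ (by rw [bmom_r]; simpa using hj)
  · have hb : wt β = 0 := by omega
    obtain ⟨j, rfl⟩ := bwt_one (by omega : wt α = 1)
    rw [bwt_zero_iff] at hb
    subst hb
    by_cases hj : j = 0
    · subst hj; exact a2
    · exact a5 _ _ (by rw [bmom_l]; simpa using hj)

theorem InF_bracket {F G : Coeffs} (hF : InF F) (hG : InF G) : InF (bracket F G) := by
  have low := bracket_low (InF_low hF) (InF_low hG)
  refine ⟨low _ _ (by simp [wt]), low _ _ (by simp [wt]), low _ _ (by simp [wt]), ?_,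
    bracket_mom F G⟩
  exact bracket_real hF.2.2.2.1 hG.2.2.2.1

theorem bracket_add_right (F G G' : Coeffs) : bracket F (G + G') = bracket F G + bracket F G' := by
  rw [bracket_anti, bracket_add_left, bracket_anti G, bracket_anti G']
  abel

noncomputable instance bLieRing : LieRing BL where
  bracket F G := ⟨bracket F.1 G.1, InF_bracket F.2 G.2⟩
  add_lie F F' G := Subtype.ext (bracket_add_left F.1 F'.1 G.1)
  lie_add F G G' := Subtype.ext (bracket_add_right F.1 G.1 G'.1)
  lie_self F := by
    apply Subtype.ext
    change bracket F.1 F.1 = 0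
    have := bracket_anti F.1 F.1
    exact self_eq_neg.1 this
  leibniz_lie F G H := Subtype.ext
    (bracket_jacobi F.2.2.2.2.2 G.2.2.2.2.2 H.2.2.2.2.2)

noncomputable instance bLieAlg : LieAlgebra ℝ BL where
  lie_smul c F G := by
    apply Subtype.ext
    change bracket F.1 (c • G.1) = c • bracket F.1 G.1
    rw [bracket_anti, bracket_smul_left, bracket_anti F.1, smul_neg]

theorem blie_coe (F G : BL) : (⁅F, G⁆ : BL).1 = bracket F.1 G.1 := rfl

/-- Homogeneous components. -/
noncomputable def bp (n : ℕ) : BL →ₗ[ℝ] BL where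
  toFun H := ⟨fun α β => if wt α + wt β = n + 2 then H.1 α β else 0, by
    obtain ⟨a1, a2, a3, a4, a5⟩ := H.2
    refine ⟨by simp [a1], by simp [a2], by simp [a3], ?_, ?_⟩
    · intro α β
      simp only
      rw [add_comm (wt β)]
      split_ifs
      · exact a4 α β
      · simp
    · intro α β h
      simp [a5 α β h]⟩
  map_add' F G := by
    apply Subtype.ext
    funext α β
    change (if wt α + wt β = n + 2 then F.1 α β + G.1 α β else 0) =
      (if wt α + wt β = n + 2 then F.1 α β else 0) +
      (if wt α + wt β = n + 2 then G.1 α β else 0)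
    split_ifs
    · rfl
    · simp
  map_smul' c F := by
    apply Subtype.ext
    funext α β
    change (if wt α + wt β = n + 2 then c • F.1 α β else 0) =
      c • (if wt α + wt β = n + 2 then F.1 α β else 0)
    split_ifs
    · rfl
    · simp

theorem bp_apply (n : ℕ) (H : BL) (α β : Idx) :
    (bp n H).1 α β = if wt α + wt β = n + 2 then H.1 α β else 0 := rfl

/-- Limits. -/
noncomputable def blim (f : ℕ → BL) : BL := ⟨fun α β => (f (wt α + wt β - 2)).1 α β, by
  refine ⟨(f _).2.1, (f _).2.2.1, (f _).2.2.2.1, ?_, ?_⟩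
  · intro α β
    simp only
    rw [add_comm (wt β)]
    exact (f _).2.2.2.2.1 α β
  · intro α β h
    exact (f _).2.2.2.2.2 α β h⟩

/-- The degree operator. -/
noncomputable def bNL : BL →ₗ[ℝ] BL where
  toFun H := ⟨bN H.1, by
    obtain ⟨a1, a2, a3, a4, a5⟩ := H.2
    refine ⟨by simp [bN, a1], by simp [bN, a2], by simp [bN, a3], ?_, ?_⟩
    · intro α β
      simp only [bN]
      rw [a4 α β, add_comm (wt β : ℝ), Complex.real_smul, Complex.real_smul, map_mul,
        Complex.conj_ofReal]
    · intro α β h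
      simp [bN, a5 α β h]⟩
  map_add' F G := by
    apply Subtype.ext
    funext α β
    exact smul_add _ _ _
  map_smul' c F := by
    apply Subtype.ext
    funext α β
    exact smul_comm ((wt α : ℝ) + (wt β : ℝ) - 2) c (F.1 α β)

theorem bfil_iff (k : ℕ) (H : BL) :
    (∀ n < k, bp n H = 0) ↔ ∀ α β, wt α + wt β < k + 2 → H.1 α β = 0 := by
  constructor
  · intro h α β hw
    by_cases h2 : wt α + wt β < 0 + 2
    · exact InF_low H.2 α β h2
    · have h3 := h (wt α + wt β - 2) (by omega)
      have h4 := congrFun (congrFun (congrArg Subtype.val h3) α) β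
      rw [bp_apply, if_pos (by omega)] at h4
      exact h4
  · intro h n hn
    apply Subtype.ext
    funext α β
    rw [bp_apply]
    split_ifs with h1
    · exact h α β (by omega)
    · rfl

/-- The graded structure of the Lie algebra of formal Hamiltonians. -/
noncomputable def bS : BGrd BL where
  p := bp
  lim := blim
  N := bNL
  pp n x := by
    apply Subtype.ext
    funext α β
    simp only [bp_apply]
    split_ifs <;> rfl
  pp' n m x h := by
    apply Subtype.ext
    funext α β
    simp only [bp_apply]
    split_ifs
    · omega
    · rfl
    · rfl
  ext x h := by
    apply Subtype.ext
    funext α β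
    exact (bfil_iff (wt α + wt β + 1) x).1 (fun n _ => h n) α β (by omega)
  p_lim n f := by
    apply Subtype.ext
    funext α β
    simp only [bp_apply]
    split_ifs with h
    · simp [blim, h]
    · rfl
  p_N n x := by
    apply Subtype.ext
    funext α β
    change (bp n (bNL x)).1 α β = (n : ℝ) • (bp n x).1 α β
    simp only [bp_apply]
    split_ifs with h
    · change ((wt α : ℝ) + (wt β : ℝ) - 2) • x.1 α β = _
      congr 1
      have : (wt α : ℝ) + wt β = n + 2 := by exact_mod_cast h
      rw [this]
      ring
    · simp
  N_lie x y := Subtype.ext (bN_bracket x.1 y.1)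
  fil_lie a b x y hx hy := by
    rw [bfil_iff] at hx hy ⊢
    exact bracket_low hx hy

theorem bS_fil (k : ℕ) (H : BL) : H ∈ bS.fil k ↔ ∀ α β, wt α + wt β < k + 2 → H.1 α β = 0 :=
  bfil_iff k H

theorem badp_coe (G x : BL) (k : ℕ) : (BGrd.adp G k x).1 = adPow G.1 k x.1 := by
  induction k with
  | zero => rfl
  | succ k ih => rw [BGrd.adp, adPow, blie_coe, ih]

theorem bE_coe (G x : BL) (hG : G ∈ bS.fil 1) : (bS.E G x).1 = expAd G.1 x.1 := by
  funext α β
  have h1 : (bS.E G x).1 α β =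
      (∑ k ∈ Finset.range (wt α + wt β - 2 + 1), BGrd.et G x k).1 α β := rfl
  rw [h1, expAd, finsum_eq_sum_of_support_subset (s := Finset.range (wt α + wt β - 2 + 1))]
  · rw [AddSubmonoidClass.coe_finsetSum, Finset.sum_apply, Finset.sum_apply]
    refine Finset.sum_congr rfl fun k _ => ?_
    change ((k.factorial : ℝ)⁻¹) • (BGrd.adp G k x).1 α β = _
    rw [badp_coe, Complex.real_smul]
    push_cast
    rfl
  · intro k hk
    by_contra hn
    apply hk
    have h2 := bS.adp_mem hG (bS.fil_zero x) k
    rw [bS_fil] at h2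
    have h3 := h2 α β (by simp at hn; omega)
    rw [badp_coe] at h3
    simp [h3]

/-- filtered Baker–Campbell–Hausdorff: for `F ∈ 𝓕^{≥d₁}` and
`G ∈ 𝓕^{≥d₂}` with `d₁, d₂ ≥ 1`, there is `K ∈ 𝓕^{≥1}` with
`e^{{G,·}} ∘ e^{{F,·}} = e^{{K,·}}` on `𝓕` and `K − F − G ∈ 𝓕^{≥d₁+d₂}`. -/
theorem baker_campbell_hausdorff (d₁ d₂ : ℕ) (hd₁ : 1 ≤ d₁) (hd₂ : 1 ≤ d₂)
    (F G : Coeffs) (hF : InFge d₁ F) (hG : InFge d₂ G) :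
    ∃ K : Coeffs, InFge 1 K ∧
      (∀ H : Coeffs, InF H → expAd G (expAd F H) = expAd K H) ∧
      InFge (d₁ + d₂) (K - F - G) := by
  have hF1 : (⟨F, hF.1⟩ : BL) ∈ bS.fil d₁ := (bS_fil _ _).2 hF.2
  have hG1 : (⟨G, hG.1⟩ : BL) ∈ bS.fil d₂ := (bS_fil _ _).2 hG.2
  obtain ⟨K, hK, hE, hD⟩ := bS.bch hd₁ hd₂ hF1 hG1
  refine ⟨K.1, ⟨K.2, (bS_fil _ _).1 hK⟩, ?_, ?_⟩
  · intro H hH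
    have h := congrArg Subtype.val (hE ⟨H, hH⟩)
    rw [bE_coe _ _ (bS.fil_mono hd₂ hG1), bE_coe _ _ (bS.fil_mono hd₁ hF1), bE_coe _ _ hK] at h
    exact h
  · exact ⟨BL.sub_mem (BL.sub_mem K.2 hF.1) hG.1, (bS_fil _ _).1 hD⟩
end

section
/- (Formal Birkhoff Normal Form, uniqueness) Let ω ∈ ℝ^ℤ be non-resonant and let H = D_ω + Z + R with Z ∈ 𝓚 ∩ 𝓕^{≥2} and R ∈ 𝓕^{≥d}, d ≥ 1, and let S ∈ 𝓕^{≥d} be such that e^{{S,·}} H = D_ω + Z̃ with Z̃ ∈ 𝓚. If G ∈ 𝓕^{≥1} is such that e^{{G,·}} H − D_ω ∈ 𝓚, then e^{{G,·}} H = e^{{S,·}} H; hence to each such H one can associate a unique Z_H ∈ 𝓚 ∩ 𝓕^{≥2} such that every formal symplectic change of variables bringing H to normal form produces D_ω + Z_H. -/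
open scoped BigOperators ENNReal

/-- Membership in `𝓚`: supported on the diagonal `{α = β}`. -/
def InK (H : Coeffs) : Prop := InF H ∧ ∀ α β, α ≠ β → H α β = 0

/-- Membership in `𝓡`: supported off the diagonal. -/
def InR (H : Coeffs) : Prop := InF H ∧ ∀ α, H α α = 0

/-- The quadratic Hamiltonian `D_ω = ∑_j ω_j |u_j|²`, whose only nonzero
coefficients are `(D_ω)_{e_j,e_j} = ω_j`. -/
noncomputable def Dom (ω : ℤ → ℝ) : Coeffs := fun α β =>
  ∑ᶠ j : ℤ, if α = Finsupp.single j 1 ∧ β = Finsupp.single j 1 then (ω j : ℂ) else 0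

/-- Non-resonance: every non-trivial finite integer combination of `ω` is nonzero. -/
def NonResonant (ω : ℤ → ℝ) : Prop :=
  ∀ ℓ : ℤ →₀ ℤ, ℓ ≠ 0 → (ℓ.sum fun j c => ω j * (c : ℝ)) ≠ 0

namespace BNF

lemma wt_add (a b : Idx) : wt (a + b) = wt a + wt b := by
  unfold wt
  exact Finsupp.sum_add_index' (fun _ => rfl) (fun _ _ _ => rfl)

lemma wt_single (j : ℤ) : wt (Finsupp.single j 1) = 1 := by
  simp [wt]

/-- one-sided momentum -/
def mm (a : Idx) : ℤ := a.sum fun j n => j * (n : ℤ)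

lemma mom_eq (a b : Idx) : mom a b = mm a - mm b := rfl

lemma mm_add (a b : Idx) : mm (a + b) = mm a + mm b := by
  unfold mm
  exact Finsupp.sum_add_index' (fun _ => by simp) (fun _ _ _ => by push_cast; ring)

lemma mm_single (j : ℤ) : mm (Finsupp.single j 1) = j := by
  simp [mm]

/-- the antisymmetric weight -/
noncomputable def ww (j : ℤ) (p q : Idx × Idx) : ℂ :=
  (p.1 j : ℂ) * (q.2 j : ℂ) - (p.2 j : ℂ) * (q.1 j : ℂ)

lemma ww_pos {j : ℤ} {p q : Idx × Idx} (h : ww j p q ≠ 0) :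
    1 ≤ (p.1 + q.1) j ∧ 1 ≤ (p.2 + q.2) j := by
  unfold ww at h
  simp only [Finsupp.add_apply]
  by_contra hc
  apply h
  have : (p.1 j = 0 ∧ q.1 j = 0) ∨ (p.2 j = 0 ∧ q.2 j = 0) := by omega
  rcases this with ⟨h1, h2⟩ | ⟨h1, h2⟩ <;> simp [h1, h2]

lemma sub_add_single {x : Idx} {j : ℤ} (h : 1 ≤ x j) :
    x - Finsupp.single j 1 + Finsupp.single j 1 = x := by
  apply tsub_add_cancel_of_le
  simpa using h

/-- combinatorial condition for a nonzero term -/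
def GoodT (α β : Idx) (x : ℤ × (Idx × Idx) × (Idx × Idx)) : Prop :=
  mom x.2.1.1 x.2.1.2 = 0 ∧ mom x.2.2.1 x.2.2.2 = 0 ∧
  x.2.1.1 + x.2.2.1 = α + Finsupp.single x.1 1 ∧
  x.2.1.2 + x.2.2.2 = β + Finsupp.single x.1 1 ∧ ww x.1 x.2.1 x.2.2 ≠ 0

lemma term_ne {F G : Coeffs} {α β : Idx} {x : ℤ × (Idx × Idx) × (Idx × Idx)}
    (h : bracketTerm F G α β x ≠ 0) :
    GoodT α β x ∧ F x.2.1.1 x.2.1.2 ≠ 0 ∧ G x.2.2.1 x.2.2.2 ≠ 0 := by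
  unfold bracketTerm at h
  split_ifs at h with hc
  · obtain ⟨h1, h2, h3, h4⟩ := hc
    have hw : ww x.1 x.2.1 x.2.2 ≠ 0 := right_ne_zero_of_mul h
    have hp := ww_pos hw
    refine ⟨⟨h1, h2, ?_, ?_, hw⟩, left_ne_zero_of_mul (left_ne_zero_of_mul h),
      right_ne_zero_of_mul (left_ne_zero_of_mul h)⟩
    · rw [h3, sub_add_single hp.1]
    · rw [h4, sub_add_single hp.2]
  · exact absurd rfl h

lemma GoodT.j_mem {α β : Idx} {x : ℤ × (Idx × Idx) × (Idx × Idx)} (h : GoodT α β x) :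
    x.1 ∈ ((α.support ∪ β.support : Finset ℤ) : Set ℤ) ∪
      ((fun p : Idx × Idx => mm p.1 - mm p.2) '' (Set.Icc 0 α ×ˢ Set.Icc 0 β) ∪
      (fun p : Idx × Idx => mm p.2 - mm p.1) '' (Set.Icc 0 α ×ˢ Set.Icc 0 β)) := by
  obtain ⟨j, ⟨a1, b1⟩, ⟨a2, b2⟩⟩ := x
  obtain ⟨h1, h2, h3, h4, hw⟩ := h
  simp only at *
  by_cases hj : j ∈ ((α.support ∪ β.support : Finset ℤ) : Set ℤ)
  · exact Or.inl hj
  right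
  simp only [Finset.coe_union, Set.mem_union, Finset.mem_coe, Finsupp.mem_support_iff, not_or,
    not_not] at hj
  have e3 : ∀ i, a1 i + a2 i = α i + (Finsupp.single j 1 : Idx) i := fun i => by
    rw [← Finsupp.add_apply, h3, Finsupp.add_apply]
  have e4 : ∀ i, b1 i + b2 i = β i + (Finsupp.single j 1 : Idx) i := fun i => by
    rw [← Finsupp.add_apply, h4, Finsupp.add_apply]
  have e3j := e3 j
  have e4j := e4 j
  simp only [hj.1, hj.2, Finsupp.single_eq_same, zero_add] at e3j e4j
  have hcase : (a1 j = 1 ∧ b1 j = 0) ∨ (a1 j = 0 ∧ b1 j = 1) := by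
    have : ¬ (a1 j = 1 ∧ b1 j = 1) ∧ ¬ (a1 j = 0 ∧ b1 j = 0) := by
      constructor
      · rintro ⟨u, v⟩
        have : a2 j = 0 := by omega
        have : b2 j = 0 := by omega
        apply hw; simp [ww, *]
      · rintro ⟨u, v⟩
        apply hw; simp [ww, *]
    omega
  rcases hcase with ⟨u, v⟩ | ⟨u, v⟩
  · right
    have ha := sub_add_single (x := a1) (j := j) (by omega)
    refine ⟨(a1 - Finsupp.single j 1, b1), ⟨⟨zero_le, ?_⟩, ⟨zero_le, ?_⟩⟩, ?_⟩
    · intro i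
      have := e3 i
      simp only [Finsupp.tsub_apply]
      omega
    · intro i
      have := e4 i
      by_cases hi : j = i
      · subst hi; simp only; omega
      · rw [Finsupp.single_eq_of_ne' hi] at this; simp only; omega
    · simp only
      have := mm_add (a1 - Finsupp.single j 1) (Finsupp.single j 1)
      rw [ha, mm_single] at this
      rw [mom_eq] at h1
      linarith
  · left
    have ha := sub_add_single (x := b1) (j := j) (by omega)
    refine ⟨(a1, b1 - Finsupp.single j 1), ⟨⟨zero_le, ?_⟩, ⟨zero_le, ?_⟩⟩, ?_⟩
    · intro i
      have := e3 i
      by_cases hi : j = i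
      · subst hi; simp only; omega
      · rw [Finsupp.single_eq_of_ne' hi] at this; simp only; omega
    · intro i
      have := e4 i
      simp only [Finsupp.tsub_apply]
      omega
    · simp only
      have := mm_add (b1 - Finsupp.single j 1) (Finsupp.single j 1)
      rw [ha, mm_single] at this
      rw [mom_eq] at h1
      linarith

lemma goodT_finite (α β : Idx) : {x | GoodT α β x}.Finite := by
  have hJ : (((α.support ∪ β.support : Finset ℤ) : Set ℤ) ∪
      ((fun p : Idx × Idx => mm p.1 - mm p.2) '' (Set.Icc 0 α ×ˢ Set.Icc 0 β) ∪
      (fun p : Idx × Idx => mm p.2 - mm p.1) '' (Set.Icc 0 α ×ˢ Set.Icc 0 β))).Finite := by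
    refine (Finset.finite_toSet _).union (Set.Finite.union ?_ ?_) <;>
    exact ((Set.finite_Icc _ _).prod (Set.finite_Icc _ _)).image _
  refine (hJ.biUnion (t := fun j => ({j} : Set ℤ) ×ˢ
    ((Set.Icc 0 (α + Finsupp.single j 1) ×ˢ Set.Icc 0 (β + Finsupp.single j 1)) ×ˢ
     (Set.Icc 0 (α + Finsupp.single j 1) ×ˢ Set.Icc 0 (β + Finsupp.single j 1)))) ?_).subset ?_
  · intro j _
    exact (Set.finite_singleton j).prod (((Set.finite_Icc _ _).prod (Set.finite_Icc _ _)).prod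
      ((Set.finite_Icc _ _).prod (Set.finite_Icc _ _)))
  · intro x hx
    refine Set.mem_biUnion hx.j_mem ?_
    obtain ⟨h1, h2, h3, h4, hw⟩ := hx
    refine ⟨rfl, ⟨⟨zero_le, ?_⟩, ⟨zero_le, ?_⟩⟩, ⟨⟨zero_le, ?_⟩, ⟨zero_le, ?_⟩⟩⟩
    · rw [← h3]; exact le_self_add
    · rw [← h4]; exact le_self_add
    · rw [← h3]; exact le_add_self
    · rw [← h4]; exact le_add_self

/-- the finite set of possibly nonzero terms -/
noncomputable def TT (α β : Idx) : Finset (ℤ × (Idx × Idx) × (Idx × Idx)) :=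
  (goodT_finite α β).toFinset

lemma mem_TT {α β : Idx} {x} : x ∈ TT α β ↔ GoodT α β x := by
  simp [TT]

lemma bracket_eq (F G : Coeffs) (α β : Idx) :
    bracket F G α β = Complex.I * ∑ x ∈ TT α β, bracketTerm F G α β x := by
  unfold bracket
  rw [finsum_eq_sum_of_support_subset]
  intro x hx
  exact mem_TT.2 (term_ne hx).1

lemma term_good (F G : Coeffs) {α β : Idx} {x} (h : GoodT α β x) :
    bracketTerm F G α β x = F x.2.1.1 x.2.1.2 * G x.2.2.1 x.2.2.2 * ww x.1 x.2.1 x.2.2 := by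
  obtain ⟨h1, h2, h3, h4, hw⟩ := h
  unfold bracketTerm
  rw [if_pos]
  · rfl
  · exact ⟨h1, h2, by rw [h3, add_tsub_cancel_right], by rw [h4, add_tsub_cancel_right]⟩

lemma bracket_eq' (F G : Coeffs) (α β : Idx) :
    bracket F G α β = Complex.I * ∑ x ∈ TT α β,
      F x.2.1.1 x.2.1.2 * G x.2.2.1 x.2.2.2 * ww x.1 x.2.1 x.2.2 := by
  rw [bracket_eq]
  congr 1
  exact Finset.sum_congr rfl fun x hx => term_good F G (mem_TT.1 hx)

/-- the bracket as a bilinear map -/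
noncomputable def br : Coeffs →ₗ[ℂ] Coeffs →ₗ[ℂ] Coeffs :=
  LinearMap.mk₂ ℂ bracket
    (fun F F' G => by
      funext α β
      simp only [bracket_eq', Pi.add_apply, add_mul, Finset.sum_add_distrib, mul_add])
    (fun c F G => by
      funext α β
      simp only [bracket_eq', Pi.smul_apply, smul_eq_mul, Finset.mul_sum]
      exact Finset.sum_congr rfl fun x hx => by ring)
    (fun F G G' => by
      funext α β
      simp only [bracket_eq', Pi.add_apply, add_mul, Finset.sum_add_distrib, mul_add])
    (fun c F G => by
      funext α β
      simp only [bracket_eq', Pi.smul_apply, smul_eq_mul, Finset.mul_sum]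
      exact Finset.sum_congr rfl fun x hx => by ring)

lemma br_def (F G : Coeffs) : br F G = bracket F G := rfl

lemma br_apply (F G : Coeffs) (α β : Idx) :
    br F G α β = Complex.I * ∑ x ∈ TT α β,
      F x.2.1.1 x.2.1.2 * G x.2.2.1 x.2.2.2 * ww x.1 x.2.1 x.2.2 := bracket_eq' F G α β

lemma ww_anti (j : ℤ) (p q : Idx × Idx) : ww j q p = - ww j p q := by
  unfold ww; ring

lemma br_anti (F G : Coeffs) : br G F = - br F G := by
  funext α β
  simp only [Pi.neg_apply, br_apply]
  rw [← mul_neg, ← Finset.sum_neg_distrib]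
  congr 1
  refine Finset.sum_bij' (fun x _ => (x.1, x.2.2, x.2.1)) (fun x _ => (x.1, x.2.2, x.2.1))
    ?_ ?_ ?_ ?_ ?_
  · intro x hx
    rw [mem_TT] at *
    obtain ⟨h1, h2, h3, h4, hw⟩ := hx
    exact ⟨h2, h1, by rw [← h3, add_comm], by rw [← h4, add_comm], by
      rw [ww_anti]; exact neg_ne_zero.2 hw⟩
  · intro x hx
    rw [mem_TT] at *
    obtain ⟨h1, h2, h3, h4, hw⟩ := hx
    exact ⟨h2, h1, by rw [← h3, add_comm], by rw [← h4, add_comm], by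
      rw [ww_anti]; exact neg_ne_zero.2 hw⟩
  · intro x _; rfl
  · intro x _; rfl
  · intro x _
    simp only
    rw [ww_anti x.1 x.2.1 x.2.2]; ring

/-- indicator -/
noncomputable def dl (p : Idx × Idx) : Coeffs := fun α β => if (α, β) = p then 1 else 0

/-- the pair `(e_j, e_j)` -/
noncomputable def ep (j : ℤ) : Idx × Idx := (Finsupp.single j 1, Finsupp.single j 1)

lemma br_dl (a b : Idx × Idx) (ha : mom a.1 a.2 = 0) (hb : mom b.1 b.2 = 0) (s : Finset ℤ)
    (hs : a.1.support ∪ a.2.support ⊆ s) :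
    br (dl a) (dl b) = ∑ j ∈ s, (Complex.I * ww j a b) • dl (a + b - ep j) := by
  funext α β
  rw [br_def, bracket]
  rw [finsum_eq_sum_of_support_subset (s := s.image (fun j => (j, a, b)))]
  · rw [Finset.sum_image (by intro x _ y _ h; simpa using h)]
    simp only [Finset.sum_apply, Pi.smul_apply, smul_eq_mul, Finset.mul_sum]
    refine Finset.sum_congr rfl fun j _ => ?_
    unfold bracketTerm dl ww ep
    simp only [ha, hb, true_and]
    by_cases h : α = a.1 + b.1 - Finsupp.single j 1 ∧ β = a.2 + b.2 - Finsupp.single j 1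
    · have h' : ((α, β) : Idx × Idx) = a + b - (Finsupp.single j 1, Finsupp.single j 1) :=
        Prod.ext h.1 h.2
      rw [if_pos h, if_pos h']
      simp
    · rw [if_neg h, if_neg]
      · simp
      · intro hc
        apply h
        rw [Prod.ext_iff] at hc
        exact hc
  · intro x hx
    obtain ⟨⟨_, _, _, _, hw⟩, h1, h2⟩ := term_ne hx
    obtain ⟨j, p, q⟩ := x
    simp only [dl, ne_eq, ite_eq_right_iff, one_ne_zero, imp_false, not_not] at h1 h2
    simp only at hw
    have e1 : p = a := h1
    have e2 : q = b := h2
    subst e1 e2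
    simp only [Finset.coe_image, Set.mem_image, Finset.mem_coe]
    refine ⟨j, hs ?_, rfl⟩
    rw [Finset.mem_union, Finsupp.mem_support_iff, Finsupp.mem_support_iff]
    by_contra hc
    push Not at hc
    apply hw
    simp [ww, hc.1, hc.2]

lemma pair_sub_add {b e : Idx × Idx} {k : ℤ} (h : ww k b e ≠ 0) : b + e - ep k + ep k = b + e := by
  have := ww_pos h
  ext1
  · exact sub_add_single this.1
  · exact sub_add_single this.2

lemma nested (a b e : Idx × Idx) (ha : mom a.1 a.2 = 0) (hb : mom b.1 b.2 = 0)
    (he : mom e.1 e.2 = 0) (s : Finset ℤ)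
    (hsa : a.1.support ∪ a.2.support ⊆ s) (hsb : b.1.support ∪ b.2.support ⊆ s) :
    br (dl a) (br (dl b) (dl e)) = ∑ k ∈ s, ∑ j ∈ s,
      (-(ww k b e * (ww j a b + ww j a e - if j = k then ((a.1 j : ℂ) - a.2 j) else 0))) •
        dl (a + b + e - ep k - ep j) := by
  rw [br_dl b e hb he s hsb, map_sum]
  refine Finset.sum_congr rfl fun k _ => ?_
  rw [map_smul]
  by_cases hw : ww k b e = 0
  · simp [hw]
  have hc := pair_sub_add hw
  have hm : mom (b + e - ep k).1 (b + e - ep k).2 = 0 := by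
    have h1 := congrArg (fun p : Idx × Idx => mm p.1 - mm p.2) hc
    simp only [Prod.fst_add, Prod.snd_add, mm_add, ep, mm_single] at h1
    rw [mom_eq] at *
    unfold ep
    linarith
  rw [br_dl a _ ha hm s hsa, Finset.smul_sum]
  refine Finset.sum_congr rfl fun j _ => ?_
  have hidx : a + (b + e - ep k) - ep j = a + b + e - ep k - ep j := by
    congr 1
    rw [add_assoc, ← hc, add_tsub_cancel_right, ← add_assoc, add_tsub_cancel_right]
  rw [hidx, smul_smul]
  congr 1
  have h1 : (((b + e - ep k).1 j : ℕ) : ℂ) = b.1 j + e.1 j - if j = k then 1 else 0 := by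
    have := congrArg (fun p : Idx × Idx => ((p.1 j : ℕ) : ℂ)) hc
    simp only [Prod.fst_add, Finsupp.add_apply, Nat.cast_add, ep] at this
    rw [← this]
    by_cases hjk : j = k
    · subst hjk; simp [ep]
    · simp [ep, hjk]
  have h2 : (((b + e - ep k).2 j : ℕ) : ℂ) = b.2 j + e.2 j - if j = k then 1 else 0 := by
    have := congrArg (fun p : Idx × Idx => ((p.2 j : ℕ) : ℂ)) hc
    simp only [Prod.snd_add, Finsupp.add_apply, Nat.cast_add, ep] at this
    rw [← this]
    by_cases hjk : j = k
    · subst hjk; simp [ep]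
    · simp [ep, hjk]
  have h3 : ww j a (b + e - ep k) =
      ww j a b + ww j a e - if j = k then ((a.1 j : ℂ) - a.2 j) else 0 := by
    rw [ww, h1, h2]
    unfold ww
    split_ifs <;> ring
  rw [h3]
  linear_combination (ww k b e * (ww j a b + ww j a e - if j = k then ((a.1 j : ℂ) - a.2 j) else 0))
    * Complex.I_mul_I

lemma antisymm_sum {M : Type*} [AddCommGroup M] [Module ℂ M] (s : Finset ℤ) (C : ℤ → ℤ → ℂ)
    (D : ℤ → ℤ → M) (hC : ∀ j k, C k j = - C j k) (hD : ∀ j k, D k j = D j k) :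
    ∑ k ∈ s, ∑ j ∈ s, C k j • D k j = 0 := by
  have h : ∑ k ∈ s, ∑ j ∈ s, C k j • D k j = - ∑ k ∈ s, ∑ j ∈ s, C k j • D k j := by
    conv_lhs => rw [Finset.sum_comm]
    rw [← Finset.sum_neg_distrib]
    refine Finset.sum_congr rfl fun k _ => ?_
    rw [← Finset.sum_neg_distrib]
    refine Finset.sum_congr rfl fun j _ => ?_
    rw [hC k j, hD k j, neg_smul]
  have h2 : (2 : ℂ) • (∑ k ∈ s, ∑ j ∈ s, C k j • D k j) = 0 := by
    rw [two_smul]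
    nth_rewrite 1 [h]
    simp
  exact (smul_eq_zero.1 h2).resolve_left two_ne_zero

lemma jacobi_dl (a b e : Idx × Idx) (ha : mom a.1 a.2 = 0) (hb : mom b.1 b.2 = 0)
    (he : mom e.1 e.2 = 0) :
    br (dl a) (br (dl b) (dl e)) + br (dl b) (br (dl e) (dl a)) + br (dl e) (br (dl a) (dl b))
      = 0 := by
  set s : Finset ℤ := (a.1.support ∪ a.2.support) ∪ ((b.1.support ∪ b.2.support) ∪
    (e.1.support ∪ e.2.support)) with hs
  have hsa : a.1.support ∪ a.2.support ⊆ s := Finset.subset_union_left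
  have hsb : b.1.support ∪ b.2.support ⊆ s :=
    Finset.subset_union_left.trans Finset.subset_union_right
  have hse : e.1.support ∪ e.2.support ⊆ s :=
    Finset.subset_union_right.trans Finset.subset_union_right
  rw [nested a b e ha hb he s hsa hsb, nested b e a hb he ha s hsb hse,
    nested e a b he ha hb s hse hsa]
  have e1 : b + e + a = a + b + e := by abel
  have e2 : e + a + b = a + b + e := by abel
  rw [e1, e2]
  simp only [← Finset.sum_add_distrib, ← add_smul]
  apply antisymm_sum
  · intro j k
    by_cases h : j = k
    · subst h
      simp only [if_true]
      unfold ww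
      ring
    · rw [if_neg h, if_neg (Ne.symm h), if_neg h, if_neg (Ne.symm h), if_neg h, if_neg (Ne.symm h)]
      unfold ww
      ring
  · intro j k
    rw [tsub_right_comm]

/-- span of the momentum-conserving monomials -/
noncomputable def FS : Submodule ℂ Coeffs :=
  Submodule.span ℂ (dl '' {p | mom p.1 p.2 = 0})

lemma jacobi_FS {A B C : Coeffs} (hA : A ∈ FS) (hB : B ∈ FS) (hC : C ∈ FS) :
    br A (br B C) + br B (br C A) + br C (br A B) = 0 := by
  induction hA using Submodule.span_induction with
  | zero => simp
  | add x y _ _ hx hy =>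
    simp only [map_add, LinearMap.add_apply]
    linear_combination hx + hy
  | smul c x _ hx =>
    simp only [map_smul, LinearMap.smul_apply, ← smul_add, hx, smul_zero]
  | mem x hx =>
  obtain ⟨a, ha, rfl⟩ := hx
  induction hB using Submodule.span_induction with
  | zero => simp
  | add x y _ _ hx hy =>
    simp only [map_add, LinearMap.add_apply]
    linear_combination hx + hy
  | smul c x _ hx =>
    simp only [map_smul, LinearMap.smul_apply, ← smul_add, hx, smul_zero]
  | mem x hx =>
  obtain ⟨b, hb, rfl⟩ := hx
  induction hC using Submodule.span_induction with
  | zero => simp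
  | add x y _ _ hx hy =>
    simp only [map_add, LinearMap.add_apply]
    linear_combination hx + hy
  | smul c x _ hx =>
    simp only [map_smul, LinearMap.smul_apply, ← smul_add, hx, smul_zero]
  | mem x hx =>
  obtain ⟨e, he, rfl⟩ := hx
  exact jacobi_dl a b e ha hb he

/-- pairs on which the value of a bracket depends -/
noncomputable def BB (p : Idx × Idx) : Finset (Idx × Idx) :=
  (TT p.1 p.2).image (fun x => x.2.1) ∪ (TT p.1 p.2).image (fun x => x.2.2)

lemma BB_mom {p q : Idx × Idx} (h : q ∈ BB p) : mom q.1 q.2 = 0 := by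
  unfold BB at h
  rw [Finset.mem_union, Finset.mem_image, Finset.mem_image] at h
  rcases h with ⟨x, hx, rfl⟩ | ⟨x, hx, rfl⟩
  · exact (mem_TT.1 hx).1
  · exact (mem_TT.1 hx).2.1

lemma br_local {F F' G G' : Coeffs} {α β : Idx}
    (hF : ∀ q ∈ BB (α, β), F q.1 q.2 = F' q.1 q.2)
    (hG : ∀ q ∈ BB (α, β), G q.1 q.2 = G' q.1 q.2) : br F G α β = br F' G' α β := by
  rw [br_apply, br_apply]
  congr 1
  refine Finset.sum_congr rfl fun x hx => ?_
  rw [hF x.2.1 (Finset.mem_union_left _ (Finset.mem_image_of_mem _ hx)),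
    hG x.2.2 (Finset.mem_union_right _ (Finset.mem_image_of_mem _ hx))]

/-- truncation to a finite set of pairs -/
noncomputable def cut (B : Finset (Idx × Idx)) (F : Coeffs) : Coeffs :=
  ∑ p ∈ B, F p.1 p.2 • dl p

lemma cut_apply {B : Finset (Idx × Idx)} (F : Coeffs) {q : Idx × Idx} (hq : q ∈ B) :
    cut B F q.1 q.2 = F q.1 q.2 := by
  unfold cut dl
  simp only [Finset.sum_apply, Pi.smul_apply, smul_eq_mul, mul_ite, mul_one, mul_zero]
  rw [Finset.sum_ite_eq]
  simp [hq]

lemma cut_mem {B : Finset (Idx × Idx)} (hB : ∀ q ∈ B, mom q.1 q.2 = 0) (F : Coeffs) :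
    cut B F ∈ FS :=
  Submodule.sum_mem _ fun p hp => Submodule.smul_mem _ _
    (Submodule.subset_span ⟨p, hB p hp, rfl⟩)

lemma jacobi (A B C : Coeffs) : br A (br B C) + br B (br C A) + br C (br A B) = 0 := by
  funext α β
  set S : Finset (Idx × Idx) := BB (α, β) ∪ (BB (α, β)).biUnion BB with hS
  have hm : ∀ q ∈ S, mom q.1 q.2 = 0 := by
    intro q hq
    rw [hS, Finset.mem_union, Finset.mem_biUnion] at hq
    rcases hq with h | ⟨p, _, h⟩ <;> exact BB_mom h
  have key : ∀ X Y Z : Coeffs, br X (br Y Z) α β = br (cut S X) (br (cut S Y) (cut S Z)) α β := by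
    intro X Y Z
    apply br_local
    · intro q hq
      exact (cut_apply X (Finset.mem_union_left _ hq)).symm
    · intro q hq
      apply br_local
      · intro r hr
        exact (cut_apply Y (Finset.mem_union_right _ (Finset.mem_biUnion.2 ⟨q, hq, hr⟩))).symm
      · intro r hr
        exact (cut_apply Z (Finset.mem_union_right _ (Finset.mem_biUnion.2 ⟨q, hq, hr⟩))).symm
  have := congrFun (congrFun (jacobi_FS (cut_mem hm A) (cut_mem hm B) (cut_mem hm C)) α) β
  simp only [Pi.add_apply] at this ⊢
  rw [key A B C, key B C A, key C A B]
  exact this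

lemma leib (A B C : Coeffs) : br A (br B C) = br (br A B) C + br B (br A C) := by
  have h := jacobi A B C
  rw [br_anti A C, map_neg, br_anti (br A B) C] at h
  rw [← sub_eq_zero, ← h]
  abel

/-- filtration by total weight -/
def V (n : ℕ) (H : Coeffs) : Prop := ∀ α β, wt α + wt β < n → H α β = 0

lemma V.mono {m n : ℕ} {H : Coeffs} (h : V n H) (hmn : m ≤ n) : V m H :=
  fun α β hw => h α β (by omega)

lemma V_zero (H : Coeffs) : V 0 H := fun _ _ h => by omega

lemma V.add {n : ℕ} {A B : Coeffs} (hA : V n A) (hB : V n B) : V n (A + B) := fun α β h => by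
  simp [hA α β h, hB α β h]

lemma V.sub {n : ℕ} {A B : Coeffs} (hA : V n A) (hB : V n B) : V n (A - B) := fun α β h => by
  simp [hA α β h, hB α β h]

lemma V.neg {n : ℕ} {A : Coeffs} (hA : V n A) : V n (-A) := fun α β h => by
  simp [hA α β h]

lemma GoodT.wt_eq {α β : Idx} {x : ℤ × (Idx × Idx) × (Idx × Idx)} (h : GoodT α β x) :
    (wt x.2.1.1 + wt x.2.1.2) + (wt x.2.2.1 + wt x.2.2.2) = wt α + wt β + 2 := by
  obtain ⟨_, _, h3, h4, _⟩ := h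
  have e3 := congrArg wt h3
  have e4 := congrArg wt h4
  simp only [wt_add, wt_single] at e3 e4
  omega

lemma V_br {m n k : ℕ} {F G : Coeffs} (hF : V m F) (hG : V n G) (hk : k + 2 ≤ m + n) :
    V k (br F G) := by
  intro α β h
  rw [br_apply, Finset.sum_eq_zero, mul_zero]
  intro x hx
  have := (mem_TT.1 hx).wt_eq
  by_cases h1 : wt x.2.1.1 + wt x.2.1.2 < m
  · rw [hF _ _ h1]; simp
  · rw [hG _ _ (by omega)]; simp

lemma V_pow {G : Coeffs} (hG : V 3 G) {n : ℕ} {H : Coeffs} (hH : V n H) (k : ℕ) :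
    V (n + k) ((br G ^ k) H) := by
  induction k with
  | zero => simpa using hH
  | succ k ih =>
    rw [pow_succ', Module.End.mul_apply]
    exact V_br hG ih (by omega)

lemma adPow_eq (G H : Coeffs) (k : ℕ) : adPow G k H = (br G ^ k) H := by
  induction k with
  | zero => rfl
  | succ k ih =>
    rw [pow_succ', Module.End.mul_apply, adPow, ih]
    rfl

/-- truncated exponential -/
noncomputable def eT (G : Coeffs) (K : ℕ) (H : Coeffs) : Coeffs :=
  ∑ k ∈ Finset.range K, ((k.factorial : ℂ))⁻¹ • (br G ^ k) H

lemma expAd_eq {G : Coeffs} (hG : V 3 G) (H : Coeffs) {K : ℕ} {α β : Idx}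
    (hK : wt α + wt β < K) : expAd G H α β = eT G K H α β := by
  unfold expAd eT
  rw [finsum_eq_sum_of_support_subset (s := Finset.range K)]
  · simp only [Finset.sum_apply, Pi.smul_apply, smul_eq_mul, adPow_eq]
  · intro k hk
    rw [Function.mem_support] at hk
    rw [Finset.coe_range, Set.mem_Iio]
    by_contra hc
    apply hk
    rw [adPow_eq, V_pow hG (V_zero H) k α β (by omega), mul_zero]

lemma V_exp_sub_eT {G : Coeffs} (hG : V 3 G) (H : Coeffs) (K : ℕ) : V K (expAd G H - eT G K H) := by
  intro α β h
  simp only [Pi.sub_apply]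
  rw [expAd_eq hG H h, sub_self]

lemma expAd_add {G : Coeffs} (hG : V 3 G) (A B : Coeffs) :
    expAd G (A + B) = expAd G A + expAd G B := by
  funext α β
  simp only [Pi.add_apply, expAd_eq hG _ (Nat.lt_succ_self (wt α + wt β))]
  simp [eT, Finset.sum_add_distrib]

lemma expAd_smul {G : Coeffs} (hG : V 3 G) (c : ℂ) (A : Coeffs) :
    expAd G (c • A) = c • expAd G A := by
  funext α β
  simp only [Pi.smul_apply, expAd_eq hG _ (Nat.lt_succ_self (wt α + wt β))]
  simp only [eT, map_smul, Finset.sum_apply, Pi.smul_apply, smul_eq_mul, Finset.mul_sum]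
  exact Finset.sum_congr rfl fun _ _ => by ring

lemma V_exp_sub {G : Coeffs} (hG : V 3 G) {n : ℕ} {H : Coeffs} (hH : V n H) :
    V (n + 1) (expAd G H - H) := by
  intro α β h
  simp only [Pi.sub_apply]
  rw [expAd_eq hG H (Nat.lt_succ_self _), eT, Finset.sum_range_succ']
  simp only [Pi.add_apply, Finset.sum_apply, Pi.smul_apply, smul_eq_mul]
  rw [Finset.sum_eq_zero]
  · simp
  · intro k _
    rw [V_pow hG hH (k + 1) α β (by omega), mul_zero]

lemma V_exp {G : Coeffs} (hG : V 3 G) {n : ℕ} {H : Coeffs} (hH : V n H) :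
    V n (expAd G H) := by
  have := ((V_exp_sub hG hH).mono (Nat.le_succ n)).add hH
  simpa using this

/-- Leibniz rule -/
lemma leib_pow (a : Module.End ℂ Coeffs) (T : ℕ → Module.End ℂ Coeffs)
    (hT : ∀ i, a * T i = T (i + 1) + T i * a) (n : ℕ) :
    ((n.factorial : ℂ))⁻¹ • (a ^ n * T 0) = ∑ p ∈ Finset.HasAntidiagonal.antidiagonal n,
      (((p.1.factorial : ℂ))⁻¹ * ((p.2.factorial : ℂ))⁻¹) • (T p.1 * a ^ p.2) := by
  have key : ∀ n, a ^ n * T 0 = ∑ p ∈ Finset.HasAntidiagonal.antidiagonal n,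
      (n.choose p.1) • (T p.1 * a ^ p.2) := by
    intro n
    induction n with
    | zero => simp
    | succ n ih =>
      rw [pow_succ', mul_assoc, ih, Finset.mul_sum]
      have := Finset.sum_antidiagonal_choose_succ_nsmul (fun i j => T i * a ^ j) n
      rw [this, ← Finset.sum_add_distrib]
      refine Finset.sum_congr rfl fun p hp => ?_
      rw [Finset.HasAntidiagonal.mem_antidiagonal] at hp
      have hch : n.choose p.2 = n.choose p.1 := by
        rw [← hp, Nat.choose_symm_add]
      rw [mul_smul_comm, ← mul_assoc, hT, add_mul, mul_assoc, ← pow_succ', hch, smul_add, add_comm]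
  rw [key, Finset.smul_sum]
  refine Finset.sum_congr rfl fun p hp => ?_
  rw [Finset.HasAntidiagonal.mem_antidiagonal] at hp
  rw [← Nat.cast_smul_eq_nsmul ℂ, smul_smul]
  congr 1
  rw [← hp, Nat.choose_symm_add, Nat.add_choose, Nat.cast_div (Nat.factorial_mul_factorial_dvd_factorial_add _ _)
    (by exact_mod_cast mul_ne_zero (Nat.factorial_ne_zero _) (Nat.factorial_ne_zero _))]
  have h1 : ((p.1 + p.2).factorial : ℂ) ≠ 0 := by exact_mod_cast Nat.factorial_ne_zero _
  have h2 : (p.1.factorial : ℂ) ≠ 0 := by exact_mod_cast Nat.factorial_ne_zero _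
  have h3 : (p.2.factorial : ℂ) ≠ 0 := by exact_mod_cast Nat.factorial_ne_zero _
  push_cast
  field_simp

lemma sum_tri {M : Type*} [AddCommMonoid M] (K : ℕ) (f : ℕ → ℕ → M)
    (hf : ∀ i j, K ≤ i + j → f i j = 0) :
    ∑ n ∈ Finset.range K, ∑ p ∈ Finset.HasAntidiagonal.antidiagonal n, f p.1 p.2 =
      ∑ i ∈ Finset.range K, ∑ j ∈ Finset.range K, f i j := by
  rw [← Finset.sum_product', Finset.sum_sigma']
  refine Finset.sum_bij_ne_zero (fun x _ _ => x.2) ?_ ?_ ?_ ?_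
  · rintro ⟨n, p⟩ h _
    simp only [Finset.mem_sigma, Finset.mem_range, Finset.HasAntidiagonal.mem_antidiagonal] at h
    simp only [Finset.mem_product, Finset.mem_range]
    omega
  · rintro ⟨n, p⟩ h _ ⟨n', p'⟩ h' _ e
    simp only [Finset.mem_sigma, Finset.mem_range, Finset.HasAntidiagonal.mem_antidiagonal] at h h' e
    subst e
    obtain ⟨_, rfl⟩ := h
    obtain ⟨_, rfl⟩ := h'
    rfl
  · rintro p hp hne
    have : p.1 + p.2 < K := by
      by_contra hc
      exact hne (hf _ _ (by omega))
    exact ⟨⟨p.1 + p.2, p⟩, by simp [this], hne, rfl⟩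
  · intros; rfl

lemma exp_T {G : Coeffs} (hG : V 3 G) (T : ℕ → Module.End ℂ Coeffs)
    (hT : ∀ i, br G * T i = T (i + 1) + T i * br G)
    (hV : ∀ i n m A, V n A → m + 2 ≤ n + i → V m (T i A)) (A : Coeffs) {α β : Idx} {K : ℕ}
    (hK : wt α + wt β + 2 < K) :
    expAd G (T 0 A) α β = ∑ i ∈ Finset.range K, ((i.factorial : ℂ))⁻¹ * T i (expAd G A) α β := by
  have h1 : ∀ i, T i (expAd G A) α β = T i (eT G K A) α β := by
    intro i
    have := hV i K (K - 2) _ (V_exp_sub_eT hG A K) (by omega) α β (by omega)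
    rw [map_sub, Pi.sub_apply, Pi.sub_apply] at this
    exact sub_eq_zero.1 this
  simp only [h1]
  rw [expAd_eq hG _ (show wt α + wt β < K by omega)]
  have h2 : eT G K (T 0 A) α β = ∑ n ∈ Finset.range K, ∑ p ∈ Finset.HasAntidiagonal.antidiagonal n,
      (((p.1.factorial : ℂ))⁻¹ * ((p.2.factorial : ℂ))⁻¹) * (T p.1 ((br G ^ p.2) A)) α β := by
    unfold eT
    rw [Finset.sum_apply, Finset.sum_apply]
    refine Finset.sum_congr rfl fun n _ => ?_
    have := congrFun (congrFun (congrArg (fun f : Module.End ℂ Coeffs => f A)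
      (leib_pow (br G) T hT n)) α) β
    simpa [LinearMap.sum_apply, Finset.sum_apply] using this
  rw [h2, sum_tri K (fun i j => (((i.factorial : ℂ))⁻¹ * ((j.factorial : ℂ))⁻¹) *
    (T i ((br G ^ j) A)) α β)]
  · refine Finset.sum_congr rfl fun i _ => ?_
    unfold eT
    rw [map_sum, Finset.sum_apply, Finset.sum_apply, Finset.mul_sum]
    refine Finset.sum_congr rfl fun j _ => ?_
    rw [map_smul, Pi.smul_apply, Pi.smul_apply, smul_eq_mul, mul_assoc]
  · intro i j hij
    rw [hV i j (i + j - 2) _ ((V_pow hG (V_zero A) j).mono (by omega)) (by omega) α β (by omega),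
      mul_zero]

lemma exp_br {G : Coeffs} (hG : V 3 G) (X A : Coeffs) :
    expAd G (br X A) = br (expAd G X) (expAd G A) := by
  funext α β
  set K := wt α + wt β + 3 with hK
  rw [show br X A = (fun i => br ((br G ^ i) X)) 0 A by simp,
    exp_T hG (fun i => br ((br G ^ i) X)) ?_ ?_ A (show wt α + wt β + 2 < K by omega)]
  · have h1 := V_br (V_exp_sub_eT hG X K) (V_zero (expAd G A)) (k := K - 2) (by omega) α β (by omega)
    rw [map_sub, LinearMap.sub_apply, Pi.sub_apply, Pi.sub_apply, sub_eq_zero] at h1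
    rw [h1, eT, map_sum, LinearMap.sum_apply, Finset.sum_apply, Finset.sum_apply]
    simp
  · intro i
    ext1 B
    simp only [Module.End.mul_apply, LinearMap.add_apply, pow_succ']
    exact leib _ _ _
  · intro i n m B hB hm
    exact V_br (V_pow hG (V_zero X) i) hB (by omega)

/-- Euler operator -/
noncomputable def EE : Module.End ℂ Coeffs where
  toFun H := fun α β => (((wt α + wt β : ℕ) : ℂ) - 2) * H α β
  map_add' A B := by funext α β; simp [mul_add]
  map_smul' c A := by funext α β; simp; ring

lemma EE_apply (H : Coeffs) (α β : Idx) : EE H α β = (((wt α + wt β : ℕ) : ℂ) - 2) * H α β := rfl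

lemma EE_br (F G : Coeffs) : EE (br F G) = br (EE F) G + br F (EE G) := by
  funext α β
  simp only [Pi.add_apply, EE_apply, br_apply]
  rw [← mul_add, ← Finset.sum_add_distrib, mul_left_comm, Finset.mul_sum]
  congr 1
  refine Finset.sum_congr rfl fun x hx => ?_
  have := (mem_TT.1 hx).wt_eq
  have h : (((wt x.2.1.1 + wt x.2.1.2 : ℕ) : ℂ)) + ((wt x.2.2.1 + wt x.2.2.2 : ℕ) : ℂ)
      = ((wt α + wt β : ℕ) : ℂ) + 2 := by exact_mod_cast this
  linear_combination (-(F x.2.1.1 x.2.1.2 * G x.2.2.1 x.2.2.2 * ww x.1 x.2.1 x.2.2)) * h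

lemma V_EE {n : ℕ} {A : Coeffs} (h : V n A) : V n (EE A) := fun α β hw => by
  rw [EE_apply, h α β hw, mul_zero]

lemma exp_EE {G : Coeffs} (hG : V 3 G) : ∃ U, V 3 U ∧ ∀ A,
    EE (expAd G A) = expAd G (EE A) + br U (expAd G A) := by
  let Uc : ℕ → Coeffs := fun i => (((i + 1).factorial : ℂ))⁻¹ • (br G ^ i) (EE G)
  have hUc : ∀ i, V (3 + i) (Uc i) := by
    intro i α β h
    simp only [Uc, Pi.smul_apply]
    rw [V_pow hG (V_EE hG) i α β h, smul_zero]
  let U : Coeffs := fun α β => ∑ i ∈ Finset.range (wt α + wt β), Uc i α β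
  have hU : ∀ K, V K (U - ∑ i ∈ Finset.range K, Uc i) := by
    intro K α β h
    rw [Pi.sub_apply, Pi.sub_apply, Finset.sum_apply, Finset.sum_apply, sub_eq_zero]
    apply Finset.sum_subset (Finset.range_mono h.le)
    intro i _ hi
    rw [Finset.mem_range] at hi
    exact hUc i α β (by omega)
  refine ⟨U, ?_, ?_⟩
  · intro α β h
    exact Finset.sum_eq_zero fun i _ => hUc i α β (by omega)
  intro A
  funext α β
  set K := wt α + wt β + 2 with hK
  let T : ℕ → Module.End ℂ Coeffs := fun i => match i with
    | 0 => EE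
    | i + 1 => - br ((br G ^ i) (EE G))
  have hmain := exp_T hG T ?_ ?_ A (show wt α + wt β + 2 < K + 1 by omega)
  · have e0 : T 0 A = EE A := rfl
    rw [e0, Finset.sum_range_succ'] at hmain
    have h1 := V_br (hU K) (V_zero (expAd G A)) (k := K - 2) (by omega)
    have h2 : br U (expAd G A) α β = br (∑ i ∈ Finset.range K, Uc i) (expAd G A) α β := by
      have := V_br (hU (K + 1)) (V_zero (expAd G A)) (k := K - 1) (by omega) α β (by omega)
      rw [map_sub, LinearMap.sub_apply, Pi.sub_apply, Pi.sub_apply, sub_eq_zero] at this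
      rw [this, Finset.sum_range_succ, map_add, LinearMap.add_apply, Pi.add_apply, Pi.add_apply,
        V_br (hUc K) (V_zero (expAd G A)) (k := K + 1) (by omega) α β (by omega), add_zero]
    rw [Pi.add_apply, Pi.add_apply, hmain, h2, map_sum, LinearMap.sum_apply, Finset.sum_apply,
      Finset.sum_apply]
    simp [T, Uc]
  · intro i
    ext1 B
    cases i with
    | zero =>
      simp only [T, Module.End.mul_apply, LinearMap.add_apply, LinearMap.neg_apply, pow_zero,
        Module.End.one_apply]
      rw [EE_br]; abel
    | succ i =>
      simp only [T, Module.End.mul_apply, LinearMap.add_apply, LinearMap.neg_apply, pow_succ',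
        map_neg]
      rw [leib]; abel
  · intro i n m B hB hm
    cases i with
    | zero => exact (V_EE hB).mono (by omega)
    | succ i =>
      exact (V_br (V_pow hG (V_EE hG) i) hB (by omega)).neg

lemma alt_sum (n : ℕ) : ∑ p ∈ Finset.HasAntidiagonal.antidiagonal n,
    ((p.1.factorial : ℂ))⁻¹ * (((p.2.factorial : ℂ))⁻¹ * (-1) ^ p.2) = if n = 0 then 1 else 0 := by
  have h := congrArg (PowerSeries.coeff n) (PowerSeries.exp_mul_exp_neg_eq_one (A := ℂ))
  rw [PowerSeries.coeff_mul, PowerSeries.coeff_one] at h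
  rw [← h]
  refine Finset.sum_congr rfl fun p _ => ?_
  simp [PowerSeries.evalNegHom, PowerSeries.coeff_rescale, PowerSeries.coeff_exp, mul_comm]

lemma exp_inv {S : Coeffs} (hS : V 3 S) (A : Coeffs) : expAd S (expAd (-S) A) = A := by
  funext α β
  set K := wt α + wt β + 1 with hK
  have hS' := hS.neg
  have h1 : V K (expAd S (expAd (-S) A) - expAd S (eT (-S) K A)) := by
    have := V_exp hS (V_exp_sub_eT hS' A K)
    rw [sub_eq_add_neg, expAd_add hS, show -eT (-S) K A = (-1 : ℂ) • eT (-S) K A by simp,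
      expAd_smul hS] at this
    simpa [sub_eq_add_neg] using this
  have h2 := h1 α β (by omega)
  rw [Pi.sub_apply, Pi.sub_apply, sub_eq_zero] at h2
  rw [h2, expAd_eq hS _ (show wt α + wt β < K by omega)]
  have h3 : eT S K (eT (-S) K A) α β = ∑ i ∈ Finset.range K, ∑ j ∈ Finset.range K,
      ((i.factorial : ℂ))⁻¹ * (((j.factorial : ℂ))⁻¹ * (-1) ^ j) * (br S ^ (i + j)) A α β := by
    unfold eT
    rw [Finset.sum_apply, Finset.sum_apply]
    refine Finset.sum_congr rfl fun i _ => ?_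
    rw [map_sum, Finset.smul_sum, Finset.sum_apply, Finset.sum_apply]
    refine Finset.sum_congr rfl fun j _ => ?_
    have e : (br (-S) ^ j) A = ((-1 : ℂ) ^ j) • (br S ^ j) A := by
      have e' : br (-S) = (-1 : ℂ) • br S := by
        rw [map_neg]; ext x; simp
      rw [e', smul_pow, LinearMap.smul_apply]
    rw [e, map_smul, map_smul, pow_add, Module.End.mul_apply]
    simp only [Pi.smul_apply, smul_eq_mul]
    ring
  rw [h3, ← sum_tri K (fun i j =>
      ((i.factorial : ℂ))⁻¹ * (((j.factorial : ℂ))⁻¹ * (-1) ^ j) * (br S ^ (i + j)) A α β)]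
  · have h4 : ∀ n ∈ Finset.range K, ∑ p ∈ Finset.HasAntidiagonal.antidiagonal n,
        ((p.1.factorial : ℂ))⁻¹ * (((p.2.factorial : ℂ))⁻¹ * (-1) ^ p.2) *
          (br S ^ (p.1 + p.2)) A α β = if n = 0 then A α β else 0 := by
      intro n _
      have : ∀ p ∈ Finset.HasAntidiagonal.antidiagonal n,
        ((p.1.factorial : ℂ))⁻¹ * (((p.2.factorial : ℂ))⁻¹ * (-1) ^ p.2) *
          (br S ^ (p.1 + p.2)) A α β = ((p.1.factorial : ℂ))⁻¹ *
            (((p.2.factorial : ℂ))⁻¹ * (-1) ^ p.2) * (br S ^ n) A α β := by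
        intro p hp
        rw [Finset.HasAntidiagonal.mem_antidiagonal] at hp
        rw [hp]
      rw [Finset.sum_congr rfl this, ← Finset.sum_mul, alt_sum]
      split_ifs with h
      · subst h; simp
      · simp
    rw [Finset.sum_congr rfl h4, Finset.sum_ite_eq']
    simp [hK]
  · intro i j hij
    rw [V_pow hS (V_zero A) (i + j) α β (by omega), mul_zero]

/-- properties of formal symplectic changes of variables -/
structure Sym (Φ : Coeffs → Coeffs) : Prop where
  add : ∀ A B, Φ (A + B) = Φ A + Φ B
  smul : ∀ (c : ℂ) A, Φ (c • A) = c • Φ A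
  brk : ∀ A B, Φ (br A B) = br (Φ A) (Φ B)
  unip : ∀ n A, V n A → V (n + 1) (Φ A - A)
  eul : ∃ W, V 3 W ∧ ∀ A, EE (Φ A) = Φ (EE A) + br W (Φ A)

lemma sym_exp {G : Coeffs} (hG : V 3 G) : Sym (expAd G) :=
  ⟨expAd_add hG, expAd_smul hG, exp_br hG, fun _ _ h => V_exp_sub hG h, exp_EE hG⟩

lemma Sym.V {Φ : Coeffs → Coeffs} (h : Sym Φ) {n : ℕ} {A : Coeffs} (hA : V n A) : V n (Φ A) := by
  have := ((h.unip n A hA).mono (Nat.le_succ n)).add hA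
  simpa using this

lemma Sym.comp {Φ Ψ : Coeffs → Coeffs} (h : Sym Φ) (h' : Sym Ψ) : Sym (Φ ∘ Ψ) := by
  refine ⟨fun A B => ?_, fun c A => ?_, fun A B => ?_, fun n A hA => ?_, ?_⟩
  · simp [h.add, h'.add]
  · simp [h.smul, h'.smul]
  · simp [h.brk, h'.brk]
  · have := (h.unip n _ (h'.V hA)).add (h'.unip n A hA)
    simpa using this
  · obtain ⟨W, hW, e⟩ := h.eul
    obtain ⟨W', hW', e'⟩ := h'.eul
    refine ⟨W + Φ W', hW.add (h.V hW'), fun A => ?_⟩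
    simp only [Function.comp_apply]
    rw [e, e', h.add, h.brk, map_add, LinearMap.add_apply]
    abel

/-- diagonal on momentum-zero pairs -/
def DiagP (M : Coeffs) : Prop := ∀ α β, mom α β = 0 → α ≠ β → M α β = 0

lemma br_diag {A B : Coeffs} (hA : DiagP A) (hB : DiagP B) : br A B = 0 := by
  funext α β
  rw [br_apply, Finset.sum_eq_zero, mul_zero]
  · rfl
  intro x hx
  obtain ⟨h1, h2, _, _, _⟩ := mem_TT.1 hx
  by_cases ha : x.2.1.1 = x.2.1.2
  · by_cases hb : x.2.2.1 = x.2.2.2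
    · have : ww x.1 x.2.1 x.2.2 = 0 := by
        unfold ww
        rw [ha, hb]; ring
      rw [this, mul_zero]
    · rw [hB _ _ h2 hb]; simp
  · rw [hA _ _ h1 ha]; simp

lemma Dom_single (ω : ℤ → ℝ) (k : ℤ) :
    Dom ω (Finsupp.single k 1) (Finsupp.single k 1) = ω k := by
  unfold Dom
  rw [finsum_eq_single _ k]
  · simp
  · intro j hj
    rw [if_neg]
    rintro ⟨h, _⟩
    exact hj ((Finsupp.single_left_injective one_ne_zero) h).symm

lemma Dom_ne {ω : ℤ → ℝ} {α β : Idx} (h : Dom ω α β ≠ 0) :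
    ∃ k, α = Finsupp.single k 1 ∧ β = Finsupp.single k 1 := by
  by_contra hc
  push Not at hc
  apply h
  unfold Dom
  rw [finsum_eq_zero_of_forall_eq_zero]
  intro j
  rw [if_neg]
  rintro ⟨h1, h2⟩
  exact hc j h1 h2

lemma V_Dom (ω : ℤ → ℝ) : V 2 (Dom ω) := by
  intro α β h
  by_contra hc
  obtain ⟨k, rfl, rfl⟩ := Dom_ne hc
  rw [wt_single] at h
  omega

lemma diag_Dom (ω : ℤ → ℝ) : DiagP (Dom ω) := by
  intro α β _ h
  by_contra hc
  obtain ⟨k, rfl, rfl⟩ := Dom_ne hc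
  exact h rfl

lemma br_Dom (ω : ℤ → ℝ) (M : Coeffs) (α β : Idx) (hm : mom α β = 0) :
    br (Dom ω) M α β = Complex.I * (((∑ j ∈ α.support ∪ β.support,
      ω j * ((β j : ℝ) - (α j : ℝ)) : ℝ) : ℂ) * M α β) := by
  rw [br_def, bracket]
  congr 1
  rw [finsum_eq_sum_of_support_subset
    (s := (α.support ∪ β.support).image (fun j => (j, ep j, (α, β))))]
  · rw [Finset.sum_image (by
      intro x _ y _ h
      exact (Prod.ext_iff.1 h).1)]
    push_cast
    rw [Finset.sum_mul]
    refine Finset.sum_congr rfl fun j _ => ?_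
    unfold bracketTerm ep
    rw [if_pos]
    · simp only [Dom_single, Finsupp.single_eq_same]
      push_cast
      ring
    · exact ⟨by simp [mom], hm, by simp, by simp⟩
  · intro x hx
    obtain ⟨⟨_, _, h3, h4, hw⟩, h1, h2⟩ := term_ne hx
    obtain ⟨j, ⟨p1, p2⟩, ⟨q1, q2⟩⟩ := x
    simp only at *
    obtain ⟨k, rfl, rfl⟩ := Dom_ne h1
    have hjk : j = k := by
      by_contra hc
      apply hw
      simp [ww, hc]
    subst hjk
    have e1 : q1 = α := by
      rw [add_comm] at h3
      exact add_right_cancel h3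
    have e2 : q2 = β := by
      rw [add_comm] at h4
      exact add_right_cancel h4
    subst e1 e2
    simp only [Finset.coe_image, Set.mem_image, Finset.mem_coe]
    refine ⟨j, ?_, rfl⟩
    rw [Finset.mem_union, Finsupp.mem_support_iff, Finsupp.mem_support_iff]
    by_contra hc
    push Not at hc
    apply hw
    simp [ww, hc.1, hc.2]

lemma nonres {ω : ℤ → ℝ} (hω : NonResonant ω) {α β : Idx} (h : α ≠ β) :
    (∑ j ∈ α.support ∪ β.support, ω j * ((β j : ℝ) - (α j : ℝ))) ≠ 0 := by
  let ℓ : ℤ →₀ ℤ := β.mapRange (fun n : ℕ => (n : ℤ)) rfl - α.mapRange (fun n : ℕ => (n : ℤ)) rfl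
  have hl : ∀ j, ℓ j = (β j : ℤ) - (α j : ℤ) := fun j => by simp [ℓ]
  have h0 : ℓ ≠ 0 := by
    intro hc
    apply h
    ext j
    have := hl j
    rw [hc, Finsupp.zero_apply] at this
    omega
  have := hω ℓ h0
  rw [Finsupp.sum_of_support_subset ℓ (s := α.support ∪ β.support)] at this
  · simpa [hl] using this
  · intro j hj
    rw [Finsupp.mem_support_iff, hl] at hj
    rw [Finset.mem_union, Finsupp.mem_support_iff, Finsupp.mem_support_iff]
    omega
  · simp

lemma central {ω : ℤ → ℝ} (hω : NonResonant ω) {Z M : Coeffs} (hZ : DiagP Z) (hZ3 : V 3 Z)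
    (h : DiagP (br (Dom ω + Z) M)) : DiagP M := by
  have key : ∀ n, ∀ α β, wt α + wt β = n → mom α β = 0 → α ≠ β → M α β = 0 := by
    intro n
    induction n using Nat.strong_induction_on with
    | _ n ih =>
    intro α β hn hm hne
    have h1 := h α β hm hne
    rw [map_add, LinearMap.add_apply, Pi.add_apply, Pi.add_apply, br_Dom ω M α β hm] at h1
    have h2 : br Z M α β = 0 := by
      rw [br_apply, Finset.sum_eq_zero, mul_zero]
      intro x hx
      have hw := (mem_TT.1 hx).wt_eq
      obtain ⟨m1, m2, _, _, _⟩ := mem_TT.1 hx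
      by_cases hz : wt x.2.1.1 + wt x.2.1.2 < 3
      · rw [hZ3 _ _ hz]; simp
      by_cases ha : x.2.1.1 = x.2.1.2
      · by_cases hb : x.2.2.1 = x.2.2.2
        · have : ww x.1 x.2.1 x.2.2 = 0 := by
            unfold ww
            rw [ha, hb]; ring
          rw [this, mul_zero]
        · rw [ih _ (by omega) _ _ rfl m2 hb]; simp
      · rw [hZ _ _ m1 ha]; simp
    rw [h2, add_zero] at h1
    have h3 := (mul_eq_zero.1 h1).resolve_left Complex.I_ne_zero
    refine (mul_eq_zero.1 h3).resolve_left ?_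
    exact_mod_cast nonres hω hne
  exact fun α β => key _ α β rfl

/-- multiplication by `∏_{k<n} (wt - k)` -/
noncomputable def AA (N : Coeffs) (n : ℕ) : Coeffs := fun α β =>
  (∏ k ∈ Finset.range n, (((wt α + wt β : ℕ) : ℂ) - k)) * N α β

lemma AA_succ (N : Coeffs) (n : ℕ) : AA N (n + 1) = EE (AA N n) + (2 - n : ℂ) • AA N n := by
  funext α β
  simp only [AA, Pi.add_apply, Pi.smul_apply, EE_apply, smul_eq_mul, Finset.prod_range_succ]
  ring

lemma diag_AA {N : Coeffs} (h : DiagP N) (n : ℕ) : DiagP (AA N n) := fun α β hm hne => by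
  rw [AA, h α β hm hne, mul_zero]

lemma V_AA (N : Coeffs) (n : ℕ) : V n (AA N n) := fun α β hw => by
  rw [AA, Finset.prod_eq_zero (Finset.mem_range.2 hw) (sub_self _), zero_mul]

lemma final {ω : ℤ → ℝ} (hω : NonResonant ω) {Φ : Coeffs → Coeffs} (hΦ : Sym Φ) {N Z : Coeffs}
    (hN : DiagP N) (hZ : DiagP Z) (hZ3 : V 3 Z) (e : Φ N = Dom ω + Z) : Φ N = N := by
  have hd : DiagP (Φ N) := by
    intro α β hm hne
    rw [e, Pi.add_apply, Pi.add_apply, diag_Dom ω α β hm hne, hZ α β hm hne, add_zero]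
  have h0 : Φ 0 = 0 := by simpa using hΦ.smul 0 0
  have hK : ∀ A, DiagP A → DiagP (Φ A) := by
    intro A hA
    apply central hω hZ hZ3
    rw [← e, ← hΦ.brk, br_diag hN hA, h0]
    intro _ _ _ _; rfl
  obtain ⟨W, hW, hE⟩ := hΦ.eul
  have hEd : ∀ A, DiagP A → DiagP (EE A) := fun A hA α β hm hne => by
    rw [EE_apply, hA α β hm hne, mul_zero]
  have hWd : DiagP W := by
    apply central hω hZ hZ3
    rw [← e, br_anti W (Φ N)]
    have h1 : br W (Φ N) = EE (Φ N) - Φ (EE N) := by rw [hE N]; abel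
    rw [h1]
    intro α β hm hne
    rw [Pi.neg_apply, Pi.neg_apply, Pi.sub_apply, Pi.sub_apply, hEd _ hd α β hm hne,
      hK _ (hEd _ hN) α β hm hne]
    simp
  have hA : ∀ n, Φ (AA N n) = AA (Φ N) n := by
    intro n
    induction n with
    | zero =>
      have : ∀ M, AA M 0 = M := fun M => by funext α β; simp [AA]
      rw [this, this]
    | succ n ih =>
      rw [AA_succ, AA_succ, hΦ.add, hΦ.smul, ← ih, hE, br_diag hWd (hK _ (diag_AA hN n)), add_zero]
  funext α β
  have h1 := hΦ.unip _ _ (V_AA N (wt α + wt β)) α β (Nat.lt_succ_self _)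
  rw [hA, Pi.sub_apply, Pi.sub_apply, AA, AA, ← mul_sub] at h1
  refine sub_eq_zero.1 ((mul_eq_zero.1 h1).resolve_left ?_)
  apply Finset.prod_ne_zero_iff.2
  intro k hk
  rw [Finset.mem_range] at hk
  rw [sub_ne_zero]
  exact_mod_cast hk.ne'

end BNF

/-- formal Birkhoff normal form, uniqueness: with `H = D_ω +
Z + R` as in the existence statement and `S ∈ 𝓕^{≥d}` normalizing `H`, any
`G ∈ 𝓕^{≥1}` with `e^{{G,·}} H − D_ω ∈ 𝓚` produces the same normal form:
`e^{{G,·}} H = e^{{S,·}} H`. -/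
theorem birkhoff_normal_form_unique (ω : ℤ → ℝ) (hω : NonResonant ω)
    (d : ℕ) (hd : 1 ≤ d) (Z R S G Ztil : Coeffs)
    (hZK : InK Z) (hZ2 : InFge 2 Z) (hR : InFge d R)
    (hS : InFge d S) (hSnf : expAd S (Dom ω + Z + R) = Dom ω + Ztil)
    (hZtil : InK Ztil)
    (hG : InFge 1 G) (hGnf : InK (expAd G (Dom ω + Z + R) - Dom ω)) :
    expAd G (Dom ω + Z + R) = expAd S (Dom ω + Z + R) := by
  have hG3 : BNF.V 3 G := fun α β h => hG.2 α β (by omega)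
  have hS3 : BNF.V 3 S := fun α β h => hS.2 α β (by omega)
  set H := Dom ω + Z + R with hH
  have hHD : BNF.V 3 (H - Dom ω) := by
    intro α β h
    simp [hH, hZ2.2 α β (by omega), hR.2 α β (by omega)]
  have hH2 : BNF.V 2 H := by
    have := (hHD.mono (show 2 ≤ 3 by omega)).add (BNF.V_Dom ω)
    simpa using this
  have hZ3 : BNF.V 3 (expAd G H - Dom ω) := by
    have := (BNF.V_exp_sub hG3 hH2).add hHD
    simpa using this
  have hN : BNF.DiagP (expAd S H) := by
    intro α β hm hne
    rw [hSnf, Pi.add_apply, Pi.add_apply, BNF.diag_Dom ω α β hm hne, hZtil.2 α β hne, add_zero]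
  have hinv : expAd (-S) (expAd S H) = H := by
    have := BNF.exp_inv hS3.neg H
    rwa [neg_neg] at this
  have hfin := BNF.final hω ((BNF.sym_exp hG3).comp (BNF.sym_exp hS3.neg)) hN
    (fun α β _ hne => hGnf.2 α β hne) hZ3 (by simp [hinv])
  simpa [hinv] using hfin
end
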